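/- arXiv:1505.02748 — 3 statements merged into one kernel-verified Lean document; each statement's English description precedes it below -/
import Mathlib

section
/- If a subshift (X, σ) over a finite alphabet has at least d ≥ 1 distinct nonatomic generic measures, then liminf_{n→∞} P_X(n)/n ≥ d, where P_X(n) is the number of words of length n occurring in X. -/
open MeasureTheory Filter
open scoped ENNReal

/-- The left shift on bi-infinite sequences. -/
def shift {A : Type*} (x : ℤ → A) : ℤ → A := fun n => x (n + 1)

/-- A subshift: a closed, shift-invariant subset of `A^ℤ`. -/
def IsSubshift {A : Type*} [TopologicalSpace A] (X : Set (ℤ → A)) : Prop :=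
  IsClosed X ∧ shift '' X = X

/-- The word complexity `P_X(n)`: the number of words of length `n` occurring in `X`. -/
noncomputable def complexity {A : Type*} (X : Set (ℤ → A)) (n : ℕ) : ℕ :=
  Nat.card {w : Fin n → A // ∃ x ∈ X, ∃ m : ℤ, ∀ t : Fin n, x (m + (t : ℕ)) = w t}

/-- `x` is a generic point for the measure `μ`. -/
def IsGenericPt {A : Type*} [TopologicalSpace A] [MeasurableSpace A]
    (μ : Measure (ℤ → A)) (x : ℤ → A) : Prop :=
  ∀ f : (ℤ → A) → ℝ, Continuous f →
    Tendsto (fun N : ℕ => (∑ n ∈ Finset.range N, f (shift^[n] x)) / (N : ℝ))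
      atTop (nhds (∫ y, f y ∂μ))

/-- A generic measure on the subshift `X`: a Borel probability measure carried by `X`
possessing a generic point in `X`. -/
def GenericMeasureOn {A : Type*} [TopologicalSpace A] [MeasurableSpace A]
    (X : Set (ℤ → A)) (μ : Measure (ℤ → A)) : Prop :=
  IsProbabilityMeasure μ ∧ μ X = 1 ∧ ∃ x ∈ X, IsGenericPt μ x

open scoped Topology

/-!
Let `x i` be a generic point of the `i`-th measure. Nonatomicity forces `x i` not to be eventually
periodic to the right, since otherwise it would be attracted to a periodic orbit, each of whose
points would be an atom.

Fix `ε > 0`. Distinct measures integrate some function of finitely many coordinates differently, so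
for large `n` a word of length `m ≥ ε n` cannot occur below position `n` in both `x i` and `x j`:
it is long enough for its Birkhoff average to be close to both integrals. Hence the words of length
`n` in `x i` whose prefix of length `m` occurs in `x i` below position `n` form disjoint families as
`i` varies. The Morse–Hedlund argument, applied to lengths from `m` to `n`, gives each family at
least `n - m` members.
-/

/-- The word of length `k` that the sequence `ξ` shows at position `s`. -/
def window {B : Type*} (ξ : ℕ → B) (k s : ℕ) : Fin k → B := fun j => ξ (s + j)

/-- Eventual periodicity of a one-sided sequence, with a positive period. -/
def IsEventuallyPeriodic {B : Type*} (ξ : ℕ → B) : Prop :=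
  ∃ p > 0, ∀ᶠ t in atTop, ξ (t + p) = ξ t

/-- The words of length `k` occurring in `ξ` whose prefix of length `m` occurs in `ξ` at some
position below `n`. The prefix is compared through positions of `ξ`, so this is the intended
notion only for `m ≤ k`. -/
def earlyExtensions {B : Type*} (ξ : ℕ → B) (m n k : ℕ) : Set (Fin k → B) :=
  window ξ k '' {s | ∃ t < n, window ξ m s = window ξ m t}

section Words

variable {B : Type*} {ξ η : ℕ → B} {m n k s t : ℕ}

lemma window_eq_window_iff : window ξ k s = window η k t ↔ ∀ j < k, ξ (s + j) = η (t + j) := by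
  simp only [window, funext_iff, Fin.forall_iff]

lemma window_eq_window_of_le (hmk : m ≤ k) (h : window ξ k s = window η k t) :
    window ξ m s = window η m t :=
  window_eq_window_iff.2 fun j hj => window_eq_window_iff.1 h j (hj.trans_le hmk)

lemma window_add_one_eq_of_window_succ_eq (h : window ξ (k + 1) s = window η (k + 1) t) :
    window ξ k (s + 1) = window η k (t + 1) :=
  window_eq_window_iff.2 fun j hj => by
    simpa only [add_assoc, add_comm 1 j] using window_eq_window_iff.1 h (j + 1) (by omega)

lemma init_image_earlyExtensions : Fin.init '' earlyExtensions ξ m n (k + 1) =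
    earlyExtensions ξ m n k :=
  Set.image_image _ _ _

lemma ncard_earlyExtensions_le_succ [Finite B] :
    (earlyExtensions ξ m n k).ncard ≤ (earlyExtensions ξ m n (k + 1)).ncard := by
  rw [← init_image_earlyExtensions]
  exact Set.ncard_image_le

lemma window_succ_eq_of_ncard_earlyExtensions_le [Finite B]
    (hcard : (earlyExtensions ξ m n (k + 1)).ncard ≤ (earlyExtensions ξ m n k).ncard)
    (hs : ∃ u < n, window ξ m s = window ξ m u) (ht : ∃ u < n, window ξ m t = window ξ m u)
    (hst : window ξ k s = window ξ k t) : window ξ (k + 1) s = window ξ (k + 1) t := by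
  have hinj : Set.InjOn Fin.init (earlyExtensions ξ m n (k + 1)) := by
    refine Set.injOn_of_ncard_image_eq ?_
    rw [init_image_earlyExtensions]
    exact ncard_earlyExtensions_le_succ.antisymm hcard
  exact hinj (Set.mem_image_of_mem _ hs) (Set.mem_image_of_mem _ ht) hst

lemma exists_window_eq_of_ncard_earlyExtensions_lt [Finite B]
    (hcard : (earlyExtensions ξ m n k).ncard < n) :
    ∃ a p, 0 < p ∧ a + p < n ∧ window ξ k a = window ξ k (a + p) := by
  obtain ⟨a, ha, b, hb, hne, hab⟩ : ∃ a ∈ Set.Iio n, ∃ b ∈ Set.Iio n, a ≠ b ∧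
      window ξ k a = window ξ k b :=
    Set.exists_ne_map_eq_of_ncard_lt_of_maps_to (t := earlyExtensions ξ m n k)
      (by simpa using hcard) fun a ha => Set.mem_image_of_mem _ ⟨a, ha, rfl⟩
  wlog hlt : a < b generalizing a b
  · exact this b hb a ha hne.symm hab.symm (by omega)
  obtain ⟨p, rfl⟩ := Nat.exists_eq_add_of_lt hlt
  exact ⟨a, p + 1, p.succ_pos, hb, hab⟩

/-- Words with an early prefix now extend uniquely to the right. A repetition of windows at `a` and
`a + p` therefore propagates: the window at `t + p` equals the one at `t`, so by induction its
prefix also occurs early, and unique extension applies again. -/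
lemma isEventuallyPeriodic_of_ncard_earlyExtensions_le [Finite B] (hmk : m ≤ k)
    (hlt : (earlyExtensions ξ m n k).ncard < n)
    (hcard : (earlyExtensions ξ m n (k + 1)).ncard ≤ (earlyExtensions ξ m n k).ncard) :
    IsEventuallyPeriodic ξ := by
  obtain ⟨a, p, hp, hapn, hap⟩ := exists_window_eq_of_ncard_earlyExtensions_lt hlt
  have hrepeat : ∀ t ≥ a, window ξ (k + 1) t = window ξ (k + 1) (t + p) ∧
      ∀ s ≤ t + p, ∃ u < n, window ξ m s = window ξ m u := by
    intro t ht
    induction t, ht using Nat.le_induction with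
    | base =>
      have hearly : ∀ s ≤ a + p, ∃ u < n, window ξ m s = window ξ m u :=
        fun s hs => ⟨s, by omega, rfl⟩
      exact ⟨window_succ_eq_of_ncard_earlyExtensions_le hcard (hearly a (by omega))
        (hearly (a + p) le_rfl) hap, hearly⟩
    | succ t _ ih =>
      obtain ⟨hwin, hearly⟩ := ih
      have hnext : window ξ k (t + 1) = window ξ k (t + 1 + p) := by
        simpa only [add_right_comm] using window_add_one_eq_of_window_succ_eq hwin
      have hearly' : ∀ s ≤ t + 1 + p, ∃ u < n, window ξ m s = window ξ m u := by
        intro s hs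
        obtain hs | rfl : s ≤ t + p ∨ s = t + 1 + p := by omega
        · exact hearly s hs
        · rw [← window_eq_window_of_le hmk hnext]
          exact hearly (t + 1) (by omega)
      exact ⟨window_succ_eq_of_ncard_earlyExtensions_le hcard (hearly' _ (by omega))
        (hearly' _ le_rfl) hnext, hearly'⟩
  refine ⟨p, hp, eventually_atTop.2 ⟨a, fun t ht => ?_⟩⟩
  exact (window_eq_window_iff.1 (hrepeat t ht).1 0 k.succ_pos).symm

theorem sub_le_ncard_earlyExtensions [Finite B] (hξ : ¬ IsEventuallyPeriodic ξ) (hmn : m ≤ n) :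
    n - m ≤ (earlyExtensions ξ m n n).ncard := by
  suffices ∀ k ≥ m, k ≤ n → k - m ≤ (earlyExtensions ξ m n k).ncard from this n hmn le_rfl
  intro k hk
  induction k, hk using Nat.le_induction with
  | base => simp
  | succ k hmk ih =>
    intro hkn
    have hmono := ncard_earlyExtensions_le_succ (ξ := ξ) (m := m) (n := n) (k := k)
    by_cases hlt : (earlyExtensions ξ m n k).ncard < n
    · have hgrow := mt (isEventuallyPeriodic_of_ncard_earlyExtensions_le hmk hlt) hξ
      have := ih (by omega)
      omega
    · omega

end Words

theorem card_mul_sub_le_complexity {A ι : Type*} [Finite A] [Fintype ι] {X : Set (ℤ → A)}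
    {x : ι → ℤ → A} (hxX : ∀ i, x i ∈ X) (hx : ∀ i, ¬ IsEventuallyPeriodic (x i ∘ Nat.cast))
    {m n : ℕ} (hmn : m ≤ n)
    (hsep : Pairwise fun i j => ∀ s < n, ∀ t < n,
      window (x i ∘ Nat.cast) m s ≠ window (x j ∘ Nat.cast) m t) :
    Fintype.card ι * (n - m) ≤ complexity X n := by
  set E : ι → Set (Fin n → A) := fun i => earlyExtensions (x i ∘ Nat.cast) m n n
  have hdisj : Pairwise (Function.onFun Disjoint E) := by
    refine fun i j hij => Set.disjoint_left.2 ?_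
    rintro _ ⟨s, ⟨u, hu, hsu⟩, rfl⟩ ⟨t, ⟨v, hv, htv⟩, hts⟩
    exact hsep hij u hu v hv (hsu.symm.trans ((window_eq_window_of_le hmn hts.symm).trans htv))
  have hsub : ⋃ i, E i ⊆ {w | ∃ y ∈ X, ∃ l : ℤ, ∀ t : Fin n, y (l + (t : ℕ)) = w t} := by
    refine Set.iUnion_subset fun i => ?_
    rintro _ ⟨s, -, rfl⟩
    exact ⟨x i, hxX i, s, fun t => by simp [window]⟩
  calc Fintype.card ι * (n - m) = ∑ _i : ι, (n - m) := by simp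
    _ ≤ ∑ i, (E i).ncard := Finset.sum_le_sum fun i _ => sub_le_ncard_earlyExtensions (hx i) hmn
    _ = (⋃ i, E i).ncard := by
      rw [Set.ncard_iUnion_of_finite (fun i => Set.toFinite _) hdisj, finsum_eq_sum_of_fintype]
    _ ≤ complexity X n := Set.ncard_le_ncard hsub

lemma shift_iterate_apply {A : Type*} (x : ℤ → A) (n : ℕ) (z : ℤ) :
    shift^[n] x z = x (z + n) := by
  induction n generalizing z with
  | zero => simp
  | succ n ih =>
    rw [Function.iterate_succ_apply', shift, ih]
    push_cast
    ring_nf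

lemma birkhoffSum_shift_eq_of_window_eq {A M : Type*} [AddCommMonoid M] {g : (ℤ → A) → M} {k : ℕ}
    (hg : DependsOn g (Set.Icc (-k : ℤ) k)) {x y : ℤ → A} {m s t : ℕ}
    (h : window (x ∘ Nat.cast) m s = window (y ∘ Nat.cast) m t) :
    birkhoffSum shift g (m - 2 * k) (shift^[s + k] x) =
      birkhoffSum shift g (m - 2 * k) (shift^[t + k] y) := by
  refine Finset.sum_congr rfl fun i hi => hg fun j hj => ?_
  simp only [Finset.mem_range, Set.mem_Icc] at hi hj
  rw [shift_iterate_apply, shift_iterate_apply, shift_iterate_apply, shift_iterate_apply]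
  convert window_eq_window_iff.1 h (j + i + k).toNat (by omega) using 1 <;>
    · simp only [Function.comp_apply]
      congr 1
      omega

lemma eventually_forall_le_abs_sub_mul_le {S : ℕ → ℝ} {I : ℝ}
    (h : Tendsto (fun N : ℕ => S N / N) atTop (𝓝 I)) {δ : ℝ} (hδ : 0 < δ) :
    ∀ᶠ n : ℕ in atTop, ∀ N ≤ n, |S N - N * I| ≤ δ * n := by
  obtain ⟨N₀, hN₀⟩ := eventually_atTop.1 (h.eventually (Metric.closedBall_mem_nhds I hδ))
  have hlarge : ∀ N ≥ max N₀ 1, |S N - N * I| ≤ δ * N := by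
    intro N hN
    have hpos : (0 : ℝ) < N := by exact_mod_cast (le_max_right _ _).trans hN
    have hdist := hN₀ N ((le_max_left _ _).trans hN)
    rwa [Real.dist_eq, div_sub' hpos.ne', abs_div, abs_of_pos hpos, div_le_iff₀ hpos] at hdist
  have hsmall : ∀ᶠ n : ℕ in atTop, ∀ N ∈ Finset.range (max N₀ 1), |S N - N * I| ≤ δ * n :=
    (eventually_all_finset _).2 fun N _ =>
      (tendsto_natCast_atTop_atTop.const_mul_atTop hδ).eventually_ge_atTop _
  filter_upwards [hsmall] with n hn N hNn
  rcases lt_or_ge N (max N₀ 1) with hN | hN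
  · exact hn N (Finset.mem_range.2 hN)
  · exact (hlarge N hN).trans (by gcongr)

lemma exists_coe_subset_Icc_neg (r : Finset ℤ) : ∃ k : ℕ, (r : Set ℤ) ⊆ Set.Icc (-k : ℤ) k := by
  refine ⟨∑ j ∈ r, j.natAbs, fun j hj => ?_⟩
  have := Finset.single_le_sum (f := Int.natAbs) (fun _ _ => Nat.zero_le _) hj
  rw [Set.mem_Icc]
  omega

section FiniteCoordinates

variable {ι : Type*} {α : ι → Type*}

lemma continuous_of_dependsOn_finset [∀ i, TopologicalSpace (α i)] [∀ i, DiscreteTopology (α i)]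
    {γ : Type*} [TopologicalSpace γ] [Nonempty γ] {g : (∀ i, α i) → γ} {s : Finset ι}
    (hg : DependsOn g s) : Continuous g := by
  obtain ⟨f, rfl⟩ := dependsOn_iff_exists_comp.1 hg
  have : Finite (s : Set ι) := s.finite_toSet
  exact continuous_of_discreteTopology.comp (Pi.continuous_domRestrict _)

lemma exists_dependsOn_integral_ne [∀ i, MeasurableSpace (α i)] {μ ν : Measure (∀ i, α i)}
    [IsFiniteMeasure μ] [IsFiniteMeasure ν] (h : μ ≠ ν) :
    ∃ (s : Finset ι) (g : (∀ i, α i) → ℝ), DependsOn g s ∧ ∫ y, g y ∂μ ≠ ∫ y, g y ∂ν := by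
  by_contra! hint
  have hcyl : ∀ t ∈ measurableCylinders α, μ t = ν t := by
    intro t ht
    have hmeas := MeasurableSet.of_mem_measurableCylinders ht
    obtain ⟨s, S, -, rfl⟩ := (mem_measurableCylinders t).1 ht
    have := hint s _ (dependsOn_cylinder_indicator_const S (1 : ℝ))
    simpa [integral_indicator_const _ hmeas, measureReal_eq_measureReal_iff] using this
  exact h (ext_of_generate_finite _ generateFrom_measurableCylinders.symm
    isPiSystem_measurableCylinders hcyl (hcyl _ (univ_mem_measurableCylinders α)))

end FiniteCoordinates

lemma exists_tendsto_shift_iterate_mul {A : Type*} [TopologicalSpace A] {x : ℤ → A}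
    (hx : IsEventuallyPeriodic (x ∘ Nat.cast)) :
    ∃ p > 0, ∃ y, Tendsto (fun q => shift^[q * p] x) atTop (𝓝 y) := by
  obtain ⟨p, hp, hper⟩ := hx
  obtain ⟨a, ha⟩ := eventually_atTop.1 hper
  refine ⟨p, hp, fun z => x (z + ((a + z.natAbs) * p : ℕ)), tendsto_pi_nhds.2 fun z => ?_⟩
  refine tendsto_const_nhds.congr' ?_
  filter_upwards [eventually_ge_atTop (a + z.natAbs)] with q hq
  rw [shift_iterate_apply]
  induction q, hq using Nat.le_induction with
  | base => rfl
  | succ q hq ih =>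
    have hqp : q ≤ q * p := Nat.le_mul_of_pos_right q hp
    obtain ⟨t, ht⟩ : ∃ t : ℕ, (t : ℤ) = z + (q * p : ℕ) :=
      ⟨(z + (q * p : ℕ)).toNat, by omega⟩
    have hat : a ≤ t := by omega
    rw [ih, ← ht, Nat.succ_mul, Nat.cast_add, ← add_assoc, ← ht]
    exact_mod_cast (ha t hat).symm

lemma sum_iterate_mul_le_birkhoffSum {α M : Type*} [AddCommMonoid M] [PartialOrder M]
    [IsOrderedAddMonoid M] {T : α → α} {f : α → M} (hf : 0 ≤ f) {p : ℕ} (hp : 0 < p) (Q : ℕ)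
    (x : α) : ∑ q ∈ Finset.range Q, f (T^[q * p] x) ≤ birkhoffSum T f (Q * p) x := by
  induction Q with
  | zero => simp
  | succ Q ih =>
    rw [Finset.sum_range_succ, Nat.succ_mul, birkhoffSum_add]
    refine add_le_add ih ?_
    exact Finset.single_le_sum (f := fun r => f (T^[r] (T^[Q * p] x))) (fun r _ => hf _)
      (Finset.mem_range.2 hp)

lemma one_le_mul_measureReal_singleton {Ω : Type*} [TopologicalSpace Ω] [T1Space Ω]
    [HasOuterApproxClosed Ω] [MeasurableSpace Ω] [OpensMeasurableSpace Ω] {μ : Measure Ω}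
    [IsFiniteMeasure μ] {y : Ω} {c : ℝ}
    (h : ∀ f : Ω → ℝ, Continuous f → 0 ≤ f → f y ≤ c * ∫ z, f z ∂μ) :
    1 ≤ c * μ.real {y} := by
  have hlim : Tendsto (fun n => c * ∫ z, (isClosed_singleton (x := y).apprSeq n z : ℝ) ∂μ) atTop
      (𝓝 (c * μ.real {y})) := by
    simp_rw [← BoundedContinuousFunction.toReal_lintegral_coe_eq_integral]
    exact ((ENNReal.tendsto_toReal (measure_ne_top μ _)).comp
      (HasOuterApproxClosed.tendsto_lintegral_apprSeq _ μ)).const_mul c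
  refine ge_of_tendsto' hlim fun n => ?_
  simpa [HasOuterApproxClosed.apprSeq_apply_eq_one _ n (Set.mem_singleton y)] using
    h (fun z => (isClosed_singleton (x := y).apprSeq n z : ℝ)) (by fun_prop)
      (fun z => NNReal.coe_nonneg _)

namespace IsGenericPt

variable {A : Type*} [TopologicalSpace A] [MeasurableSpace A] {μ ν : Measure (ℤ → A)}
  {x y : ℤ → A} {f : (ℤ → A) → ℝ}

lemma tendsto_birkhoffSum_div (hx : IsGenericPt μ x) (hf : Continuous f) :
    Tendsto (fun N : ℕ => birkhoffSum shift f N x / N) atTop (𝓝 (∫ y, f y ∂μ)) :=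
  hx f hf

lemma isProbabilityMeasure (hx : IsGenericPt μ x) : IsProbabilityMeasure μ := by
  have hone : Tendsto (fun N : ℕ => (N : ℝ) / N) atTop (𝓝 (μ.real Set.univ)) := by
    simpa using hx (fun _ => 1) continuous_const
  have hreal : μ.real Set.univ = 1 := tendsto_nhds_unique hone <|
    tendsto_const_nhds.congr' <| (eventually_ne_atTop 0).mono fun N hN => by simp [hN]
  exact ⟨by simpa [Measure.real, ENNReal.toReal_eq_one_iff] using hreal⟩

lemma eventually_abs_birkhoffSum_sub_le (hx : IsGenericPt μ x) (hf : Continuous f) {δ : ℝ}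
    (hδ : 0 < δ) : ∀ᶠ n : ℕ in atTop, ∀ s l, s + l ≤ n →
      |birkhoffSum shift f l (shift^[s] x) - l * ∫ y, f y ∂μ| ≤ δ * n := by
  filter_upwards [eventually_forall_le_abs_sub_mul_le (hx.tendsto_birkhoffSum_div hf)
    (half_pos hδ)] with n hn s l hsl
  have hsplit : birkhoffSum shift f l (shift^[s] x) - l * ∫ y, f y ∂μ =
      (birkhoffSum shift f (s + l) x - (s + l : ℕ) * ∫ y, f y ∂μ) -
        (birkhoffSum shift f s x - s * ∫ y, f y ∂μ) := by
    rw [birkhoffSum_add]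
    push_cast
    ring
  calc |birkhoffSum shift f l (shift^[s] x) - l * ∫ y, f y ∂μ|
      ≤ δ / 2 * n + δ / 2 * n := by
        rw [hsplit]
        exact (abs_sub _ _).trans (add_le_add (hn _ hsl) (hn s (by omega)))
    _ = δ * n := by ring

theorem eventually_window_ne [DiscreteTopology A] (hx : IsGenericPt μ x) (hy : IsGenericPt ν y)
    (hμν : μ ≠ ν) {ε : ℝ} (hε : 0 < ε) :
    ∀ᶠ n : ℕ in atTop, ∀ m s t : ℕ, ε * n ≤ m → s + m ≤ n → t + m ≤ n →
      window (x ∘ Nat.cast) m s ≠ window (y ∘ Nat.cast) m t := by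
  have := hx.isProbabilityMeasure
  have := hy.isProbabilityMeasure
  obtain ⟨r, g, hg, hne⟩ := exists_dependsOn_integral_ne hμν
  have hgcont := continuous_of_dependsOn_finset hg
  obtain ⟨k, hk⟩ := exists_coe_subset_Icc_neg r
  set I := ∫ z, g z ∂μ
  set J := ∫ z, g z ∂ν
  have hIJ : 0 < |I - J| := abs_pos.2 (sub_ne_zero.2 hne)
  have hδ : 0 < ε * |I - J| / 8 := by positivity
  filter_upwards [hx.eventually_abs_birkhoffSum_sub_le hgcont hδ,
    hy.eventually_abs_birkhoffSum_sub_le hgcont hδ, eventually_gt_atTop 0,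
    (tendsto_natCast_atTop_atTop.const_mul_atTop hε).eventually_ge_atTop (4 * k : ℝ)]
    with n hxn hyn hn hkn m s t hm hs ht hwin
  have hkm : 2 * k ≤ m := by
    have : (2 * k : ℝ) ≤ m := by linarith [k.cast_nonneg (α := ℝ)]
    exact_mod_cast this
  set l := m - 2 * k with hl
  have hxblock := hxn (s + k) l (by omega)
  have hyblock := hyn (t + k) l (by omega)
  rw [birkhoffSum_shift_eq_of_window_eq (hg.mono hk) hwin, abs_sub_comm] at hxblock
  have hlarge : ε * n / 2 ≤ l := by
    rw [hl]
    push_cast [hkm]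
    linarith
  have hclose : l * |I - J| ≤ ε * |I - J| / 4 * n := by
    rw [← Nat.abs_cast l, ← abs_mul, mul_sub]
    linarith [abs_sub_le (l * I) (birkhoffSum shift g l (shift^[t + k] y)) (l * J)]
  have hpos : 0 < ε * n * |I - J| := by positivity
  linarith [mul_le_mul_of_nonneg_right hlarge hIJ.le]

lemma le_mul_integral_of_tendsto (hx : IsGenericPt μ x) (hf : Continuous f) (hf₀ : 0 ≤ f) {p : ℕ}
    (hp : 0 < p) {c : ℝ} (hc : Tendsto (fun q => f (shift^[q * p] x)) atTop (𝓝 c)) :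
    c ≤ p * ∫ y, f y ∂μ := by
  have hmean : Tendsto (fun Q : ℕ => p * (birkhoffSum shift f (Q * p) x / (Q * p : ℕ))) atTop
      (𝓝 (p * ∫ y, f y ∂μ)) :=
    ((hx.tendsto_birkhoffSum_div hf).comp (tendsto_id.atTop_mul_const' hp)).const_mul _
  refine le_of_tendsto_of_tendsto' hc.cesaro hmean fun Q => ?_
  have hp' : (p : ℝ) ≠ 0 := by exact_mod_cast hp.ne'
  calc (Q : ℝ)⁻¹ * ∑ q ∈ Finset.range Q, f (shift^[q * p] x)
      ≤ (Q : ℝ)⁻¹ * birkhoffSum shift f (Q * p) x := by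
        gcongr
        exact sum_iterate_mul_le_birkhoffSum hf₀ hp Q x
    _ = p * (birkhoffSum shift f (Q * p) x / (Q * p : ℕ)) := by
        rw [Nat.cast_mul, ← mul_div_assoc, mul_comm (Q : ℝ), mul_div_mul_left _ _ hp',
          div_eq_inv_mul]

theorem not_isEventuallyPeriodic [TopologicalSpace.MetrizableSpace A] [SecondCountableTopology A]
    [OpensMeasurableSpace A] (hx : IsGenericPt μ x) (hμ : ∀ y, μ {y} = 0) :
    ¬ IsEventuallyPeriodic (x ∘ Nat.cast) := by
  intro hper
  have := hx.isProbabilityMeasure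
  obtain ⟨p, hp, y, hy⟩ := exists_tendsto_shift_iterate_mul hper
  have hatom : 1 ≤ p * μ.real {y} := one_le_mul_measureReal_singleton fun f hf hf₀ =>
    hx.le_mul_integral_of_tendsto hf hf₀ hp ((hf.tendsto y).comp hy)
  norm_num [Measure.real, hμ y] at hatom

end IsGenericPt

lemma natCast_le_liminf_natCast_div_of_floor_le {u : ℕ → ℕ} {d : ℕ}
    (h : ∀ c : ℝ, 0 < c → c < 1 → ∀ᶠ n : ℕ in atTop, d * ⌊c * n⌋₊ ≤ u n) :
    (d : ℝ≥0∞) ≤ liminf (fun n : ℕ => (u n : ℝ≥0∞) / (n : ℝ≥0∞)) atTop := by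
  have hbelow : ∀ c : ℝ, 0 < c → c < 1 → ENNReal.ofReal (d * c) ≤
      liminf (fun n : ℕ => (u n : ℝ≥0∞) / (n : ℝ≥0∞)) atTop := by
    intro c hc₀ hc₁
    have hlim : Tendsto (fun n : ℕ => ENNReal.ofReal (d * (⌊c * n⌋₊ / n))) atTop
        (𝓝 (ENNReal.ofReal (d * c))) :=
      ENNReal.tendsto_ofReal <| ((tendsto_nat_floor_mul_div_atTop hc₀.le).comp
        tendsto_natCast_atTop_atTop).const_mul _
    rw [← hlim.liminf_eq]
    refine liminf_le_liminf ?_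
    filter_upwards [h c hc₀ hc₁, eventually_gt_atTop 0] with n hn hpos
    rw [← mul_div_assoc, ENNReal.ofReal_div_of_pos (Nat.cast_pos.2 hpos), ENNReal.ofReal_natCast]
    gcongr
    exact_mod_cast hn
  have hlim : Tendsto (fun c : ℝ => ENNReal.ofReal (d * c)) (𝓝[<] 1) (𝓝 d) := by
    have hcont : Continuous fun c : ℝ => ENNReal.ofReal (d * c) :=
      ENNReal.continuous_ofReal.comp (continuous_const_mul _)
    simpa using hcont.continuousWithinAt (s := Set.Iio 1) (x := 1) |>.tendsto
  refine le_of_tendsto hlim ?_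
  filter_upwards [Ioo_mem_nhdsLT zero_lt_one] with c hc
  exact hbelow c hc.1 hc.2

theorem liminf_complexity_ge_card_generic_measures_general {A ι : Type*} [Finite A] [Fintype ι]
    [TopologicalSpace A] [DiscreteTopology A] [MeasurableSpace A] {X : Set (ℤ → A)}
    {μ : ι → Measure (ℤ → A)} (hμ : Function.Injective μ) {x : ι → ℤ → A} (hxX : ∀ i, x i ∈ X)
    (hgen : ∀ i, IsGenericPt (μ i) (x i))
    (hx : ∀ i, ¬ IsEventuallyPeriodic (x i ∘ Nat.cast)) :
    (Fintype.card ι : ℝ≥0∞) ≤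
      liminf (fun n : ℕ => (complexity X n : ℝ≥0∞) / (n : ℝ≥0∞)) atTop := by
  refine natCast_le_liminf_natCast_div_of_floor_le fun c hc₀ hc₁ => ?_
  have hdouble : Tendsto (fun n : ℕ => 2 * n) atTop atTop := tendsto_id.const_mul_atTop' two_pos
  have hsep : ∀ᶠ n : ℕ in atTop, ∀ i j, i ≠ j → ∀ m s t : ℕ, (1 - c) / 2 * (2 * n : ℕ) ≤ m →
      s + m ≤ 2 * n → t + m ≤ 2 * n →
      window (x i ∘ Nat.cast) m s ≠ window (x j ∘ Nat.cast) m t := by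
    simp only [eventually_all]
    exact fun i j hij => hdouble.eventually <|
      (hgen i).eventually_window_ne (hgen j) (hμ.ne hij) (by linarith)
  filter_upwards [hsep] with n hn
  have hfloor : ⌊c * n⌋₊ ≤ n := Nat.floor_le_of_le (by nlinarith [n.cast_nonneg (α := ℝ)])
  have hlong : (1 - c) / 2 * (2 * n : ℕ) ≤ (n - ⌊c * n⌋₊ : ℕ) := by
    push_cast [hfloor]
    linarith [Nat.floor_le (mul_nonneg hc₀.le n.cast_nonneg)]
  have hcount := card_mul_sub_le_complexity hxX hx (Nat.sub_le n ⌊c * n⌋₊)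
    fun i j hij s hs t ht => hn i j hij _ s t hlong (by omega) (by omega)
  rwa [Nat.sub_sub_self hfloor] at hcount

/-- If a subshift has at least `d ≥ 1` distinct nonatomic generic measures, then
`liminf P_X(n)/n ≥ d`. -/
theorem liminf_complexity_ge_card_generic_measures
    {A : Type*} [Fintype A] [TopologicalSpace A] [DiscreteTopology A]
    [MeasurableSpace A] [BorelSpace A]
    (X : Set (ℤ → A)) (hX : IsSubshift X) (d : ℕ) (hd : 1 ≤ d)
    (μ : Fin d → Measure (ℤ → A)) (hinj : Function.Injective μ)
    (hgen : ∀ i, GenericMeasureOn X (μ i))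
    (hna : ∀ i y, μ i {y} = 0) :
    (d : ℝ≥0∞) ≤ liminf (fun n : ℕ => (complexity X n : ℝ≥0∞) / (n : ℝ≥0∞)) atTop := by
  choose _ _ x hxX hx using hgen
  simpa using liminf_complexity_ge_card_generic_measures_general hinj hxX hx
    fun i => (hx i).not_isEventuallyPeriodic (hna i)
end

section
/- Suppose a subshift (X, σ) satisfies limsup_{n→∞} P_X(n)/n < k, and suppose (X, σ) has a generic measure μ with a generic point x_μ whose orbit closure is not uniquely ergodic. Then (X, σ) has at most k−2 distinct nonatomic generic measures. -/
/-!
In the Rauzy graph of order `n`, whose vertices are the words of length `n`, the right-special and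
left-special words are the ones with several outgoing, respectively incoming, edges. Since
eventually `P_X(n) ≤ c n` for some `c < k`, one has `P_X(n + 1) - P_X(n) < k` for orders `n` with
multiplicatively bounded gaps, and at these there are at most `k - 1` special words of each kind.

The generic point of a nonatomic generic measure is not eventually periodic, so it meets special
words of both kinds within a window of length linear in `n`; and since the empirical averages over
such windows determine the measure, generic points of distinct measures share no words there. If
there were `k - 1` nonatomic generic measures, these special words would be all there are, and a
linear window of `x_μ` would contain at most one of each kind, with just two exits. Such a window
either already contains every word of the orbit of `x_μ` or is periodic. The first is impossible,
for it would force every invariant measure on the orbit closure to agree with `μ`. The second makes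
the overlapping windows of `x_μ` periodic with a common period, so `x_μ` is eventually periodic and
`μ` has atoms. But then `μ` is not among the nonatomic measures, the windows of `x_μ` contain no
special word at all, and they again contain every word of the orbit.
-/

open MeasureTheory Filter
open scoped ENNReal

/-- The (two-sided) orbit closure of a point. -/
def orbitClosure {A : Type*} [TopologicalSpace A] (x : ℤ → A) : Set (ℤ → A) :=
  closure {y | ∃ k : ℤ, y = fun n => x (n + k)}

/-- A set `Y` is uniquely ergodic if it carries exactly one shift-invariant Borel
probability measure. -/
def UniquelyErgodicOn {A : Type*} [TopologicalSpace A] [MeasurableSpace A]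
    (Y : Set (ℤ → A)) : Prop :=
  ∃! μ : Measure (ℤ → A), IsProbabilityMeasure μ ∧ μ.map shift = μ ∧ μ Y = 1

section Digraph

variable {V V' : Type*}

/-- A vertex of the digraph `r` branches if at least two edges leave it. In the Rauzy graphs below
the branching vertices are the right-special or left-special words. -/
def Branches (r : V → V' → Prop) (v : V) : Prop := {w | r v w}.Nontrivial

theorem eq_of_not_branches {r : V → V' → Prop} {v : V} (h : ¬Branches r v) {w w' : V'}
    (hw : r v w) (hw' : r v w') : w = w' :=
  Set.not_nontrivial_iff.1 h hw hw'

theorem ncard_setOf_adj_eq [Finite V] [Finite V'] {r : V → V' → Prop} {L S : Set V}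
    (hL : ∀ v ∈ L, ∃ w, r v w) (hSL : S ⊆ L) (hS : ∀ v ∈ S, Branches r v)
    (hcard : {e : V × V' | r e.1 e.2}.ncard ≤ L.ncard + S.ncard) (v : V) :
    {w | r v w}.ncard = L.indicator 1 v + S.indicator 1 v := by
  classical
  have := Fintype.ofFinite V
  have hle : ∀ v ∈ Finset.univ, L.indicator 1 v + S.indicator 1 v ≤ {w | r v w}.ncard := by
    intro v _
    by_cases hvS : v ∈ S
    · have := Set.one_lt_ncard_iff_nontrivial.2 (hS v hvS)
      rwa [Set.indicator_of_mem hvS, Set.indicator_of_mem (hSL hvS)]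
    · by_cases hvL : v ∈ L
      · have : 0 < {w | r v w}.ncard := (Set.ncard_pos).2 (hL v hvL)
        rwa [Set.indicator_of_notMem hvS, Set.indicator_of_mem hvL]
      · simp [hvS, hvL]
  have hedges : {e : V × V' | r e.1 e.2}.ncard = ∑ v, {w | r v w}.ncard := by
    simp only [← Nat.card_coe_set_eq, ← Nat.card_sigma]
    exact Nat.card_congr (Equiv.subtypeProdEquivSigmaSubtype r)
  have hindicator : ∀ T : Set V, ∑ v, T.indicator (1 : V → ℕ) v = T.ncard := by
    intro T
    simp [Set.indicator_apply, Set.ncard_eq_toFinset_card', Finset.sum_boole]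
  refine ((Finset.sum_eq_sum_iff_of_le hle).1 (le_antisymm (Finset.sum_le_sum hle) ?_) v
    (Finset.mem_univ v)).symm
  rw [Finset.sum_add_distrib, hindicator, hindicator, ← hedges]
  exact hcard

variable {r : V → V → Prop} {W : ℕ → V}

theorem range_subset_of_adj_closed {C : Set V} (hW : ∀ t, r (W t) (W (t + 1))) (h0 : W 0 ∈ C)
    (hC : ∀ v ∈ C, ∀ w, r v w → w ∈ C) : Set.range W ⊆ C := by
  rintro _ ⟨t, rfl⟩
  induction t with
  | zero => exact h0
  | succ t ih => exact hC _ ih _ (hW t)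

theorem exists_lt_le_add_eq_of_ncard_range_le (hfin : (Set.range W).Finite) {Q : ℕ}
    (hQ : (Set.range W).ncard ≤ Q) (o : ℕ) : ∃ s t, o ≤ s ∧ s < t ∧ t ≤ o + Q ∧ W s = W t := by
  have hcard : (Set.range W).ncard < (Set.Icc o (o + Q)).ncard := by
    have : (Set.Icc o (o + Q)).ncard = Q + 1 := by
      rw [Set.ncard_eq_toFinset_card', Set.toFinset_Icc, Nat.card_Icc]
      omega
    omega
  obtain ⟨s, hs, t, ht, hne, hst⟩ := Set.exists_ne_map_eq_of_ncard_lt_of_maps_to hcard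
    (fun a _ => Set.mem_range_self a) hfin
  rcases hne.lt_or_gt with h | h
  · exact ⟨s, t, hs.1, h, ht.2, hst⟩
  · exact ⟨t, s, ht.1, h, hs.2, hst.symm⟩

theorem succ_mem_image_Iio {s N a : ℕ} (hs : s < N) (hsN : W s = W N) (ha : a < N) :
    W (a + 1) ∈ W '' Set.Iio N := by
  rcases Nat.lt_or_eq_of_le (Nat.succ_le_of_lt ha) with h | h
  · exact ⟨a + 1, h, rfl⟩
  · exact ⟨s, hs, by rw [hsN, ← h]⟩

theorem exists_period_of_deterministic {Q N s t : ℕ} (hst : s < t) (htQ : t ≤ Q)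
    (heq : W s = W t)
    (hdet : ∀ a < N, ∀ b < N, W a = W b → W (a + 1) = W (b + 1)) :
    ∃ p, 1 ≤ p ∧ p ≤ Q ∧ ∀ j, Q ≤ j → j + p ≤ N → W (j + p) = W j := by
  have key : ∀ j, t + j ≤ N → W (s + j) = W (t + j) := by
    intro j
    induction j with
    | zero => exact fun _ => heq
    | succ j ih => exact fun hj => hdet (s + j) (by omega) (t + j) (by omega) (ih (by omega))
  refine ⟨t - s, by omega, by omega, fun j hj hjN => ?_⟩
  have := key (j - s) (by omega)
  rw [show s + (j - s) = j by omega, show t + (j - s) = j + (t - s) by omega] at this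
  exact this.symm

theorem range_subset_of_forall_not_branches (hW : ∀ t, r (W t) (W (t + 1)))
    (hfin : (Set.range W).Finite) {Q : ℕ} (hQ : (Set.range W).ncard ≤ Q)
    (hB : ∀ v ∈ W '' Set.Iic Q, ¬Branches r v) : Set.range W ⊆ W '' Set.Iic Q := by
  obtain ⟨s, N, -, hsN, hNQ, heq⟩ := exists_lt_le_add_eq_of_ncard_range_le hfin hQ 0
  rw [zero_add] at hNQ
  have hsub : W '' Set.Iio N ⊆ W '' Set.Iic Q := Set.image_mono fun a ha => ha.le.trans hNQ
  have h0 : W 0 ∈ W '' Set.Iio N := Set.mem_image_of_mem W (Set.mem_Iio.2 (by omega))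
  refine (range_subset_of_adj_closed hW h0 ?_).trans hsub
  rintro _ ⟨a, ha, rfl⟩ w hw
  rw [eq_of_not_branches (hB _ (hsub ⟨a, ha, rfl⟩)) hw (hW a)]
  exact succ_mem_image_Iio hsN heq ha

theorem exists_period_of_forall_not_branches (hW : ∀ t, r (W t) (W (t + 1)))
    (hfin : (Set.range W).Finite) {Q : ℕ} (hQ : (Set.range W).ncard ≤ Q)
    (hB : ∀ v ∈ W '' Set.Iic Q, ¬Branches r v) :
    ∃ p, 1 ≤ p ∧ ∀ j, Q ≤ j → W (j + p) = W j := by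
  have hsub := range_subset_of_forall_not_branches hW hfin hQ hB
  obtain ⟨s, t, -, hst, htQ, heq⟩ := exists_lt_le_add_eq_of_ncard_range_le hfin hQ 0
  have key : ∀ j, W (s + j) = W (t + j) := by
    intro j
    induction j with
    | zero => exact heq
    | succ j ih =>
      exact eq_of_not_branches (hB _ (hsub ⟨s + j, rfl⟩)) (hW _) (by rw [ih]; exact hW _)
  refine ⟨t - s, by omega, fun j hj => ?_⟩
  have := key (j - s)
  rw [show s + (j - s) = j by omega, show t + (j - s) = j + (t - s) by omega] at this
  exact this.symm

theorem range_subset_or_exists_period (hW : ∀ t, r (W t) (W (t + 1)))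
    (hfin : (Set.range W).Finite) {Q H : ℕ} (hQ : (Set.range W).ncard ≤ Q)
    (h2 : ∀ v, {w | r v w}.encard ≤ 2)
    (hB : {v ∈ W '' Set.Iic (H + Q) | Branches r v}.Subsingleton) :
    Set.range W ⊆ W '' Set.Iic (H + Q) ∨
      ∃ p, 1 ≤ p ∧ p ≤ Q ∧ ∀ j, Q ≤ j → j + p ≤ H → W (j + p) = W j := by
  obtain ⟨s, N, hHs, hsN, hNH, heq⟩ := exists_lt_le_add_eq_of_ncard_range_le hfin hQ H
  by_cases hdet : ∀ a < N, ∀ b < N, W a = W b → W (a + 1) = W (b + 1)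
  · obtain ⟨s', t, -, hst, htQ, heq'⟩ := exists_lt_le_add_eq_of_ncard_range_le hfin hQ 0
    obtain ⟨p, hp, hpQ, hper⟩ := exists_period_of_deterministic hst htQ heq' hdet
    exact Or.inr ⟨p, hp, by omega, fun j hj hjH => hper j (by omega) (by omega)⟩
  -- Both exits of the only branching vertex stay inside the window, so the walk cannot leave it.
  push Not at hdet
  obtain ⟨a, ha, b, hb, hab, hne⟩ := hdet
  have hra : r (W a) (W (a + 1)) := hW a
  have hrb : r (W a) (W (b + 1)) := hab ▸ hW b
  have hsub : W '' Set.Iio N ⊆ W '' Set.Iic (H + Q) := Set.image_mono fun c hc => hc.le.trans hNH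
  have h0 : W 0 ∈ W '' Set.Iio N := Set.mem_image_of_mem W (Set.mem_Iio.2 (by omega))
  refine Or.inl ((range_subset_of_adj_closed hW h0 ?_).trans hsub)
  rintro _ ⟨c, hc, rfl⟩ w hw
  by_cases hcB : Branches r (W c)
  · have hca : W c = W a :=
      hB ⟨hsub ⟨c, hc, rfl⟩, hcB⟩ ⟨hsub ⟨a, ha, rfl⟩, _, hra, _, hrb, hne⟩
    have hpair : {W (a + 1), W (b + 1)} = {w | r (W a) w} :=
      (Set.toFinite _).eq_of_subset_of_encard_le
        (Set.pair_subset hra hrb) ((h2 (W a)).trans (Set.encard_pair hne).ge)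
    rcases hpair.ge (show w ∈ {w | r (W a) w} from hca ▸ hw) with rfl | rfl
    · exact succ_mem_image_Iio hsN heq ha
    · exact succ_mem_image_Iio hsN heq hb
  · rw [eq_of_not_branches hcB hw (hW c)]
    exact succ_mem_image_Iio hsN heq hc

end Digraph

section Words

variable {A : Type*} {X : Set (ℤ → A)} {x y : ℤ → A} {n L Q : ℕ} {ε : ℤˣ}

/-- The word of length `n` that `x` carries at position `a`. -/
def word (x : ℤ → A) (n : ℕ) (a : ℤ) : Fin n → A := fun t => x (a + (t : ℕ))

/-- The set of words of length `n` occurring in `X`. -/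
def language (X : Set (ℤ → A)) (n : ℕ) : Set (Fin n → A) := {w | ∃ x ∈ X, ∃ a, word x n a = w}

/-- The edges of the Rauzy graph of order `n`, traversed to the right for `ε = 1` and to the left
for `ε = -1`: `v` and `w` are adjacent if some point of `X` carries them at positions `a` and
`a + ε`. The branching vertices are the right-special and the left-special words respectively. -/
def rauzyAdj (X : Set (ℤ → A)) (n : ℕ) (ε : ℤˣ) (v w : Fin n → A) : Prop :=
  ∃ x ∈ X, ∃ a : ℤ, word x n a = v ∧ word x n (a + ε) = w

/-- The words of length `n` that `x` carries at the positions `0, …, L`. -/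
def windowWords (x : ℤ → A) (n L : ℕ) : Set (Fin n → A) :=
  (fun s : ℕ => word x n s) '' Set.Iic L

/-- `x` is periodic from some position on towards the right. -/
def EventuallyPeriodic (x : ℤ → A) : Prop :=
  ∃ p : ℕ, 1 ≤ p ∧ ∃ T : ℤ, ∀ j ≥ T, x (j + p) = x j

theorem word_eq_word_iff {a b : ℤ} :
    word x n a = word y n b ↔ ∀ i : ℕ, i < n → x (a + i) = y (b + i) :=
  ⟨fun h i hi => congr_fun h ⟨i, hi⟩, fun h => funext fun i => h i i.2⟩

theorem init_word (a : ℤ) : Fin.init (word x (n + 1) a) = word x n a := rfl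

theorem tail_word (a : ℤ) : Fin.tail (word x (n + 1) a) = word x n (a + 1) := by
  ext t
  simp only [Fin.tail, word, Fin.val_succ, Nat.cast_add, Nat.cast_one]
  congr 1
  ring

theorem ncard_language : (language X n).ncard = complexity X n := by
  simp only [language, word, funext_iff]
  rfl

theorem rauzyAdj_word (hx : x ∈ X) (a : ℤ) :
    rauzyAdj X n ε (word x n a) (word x n (a + ε)) :=
  ⟨x, hx, a, rfl, rfl⟩

theorem ncard_setOf_rauzyAdj_le [Finite A] (X : Set (ℤ → A)) (n : ℕ) (ε : ℤˣ) :
    {e : (Fin n → A) × (Fin n → A) | rauzyAdj X n ε e.1 e.2}.ncard ≤ complexity X (n + 1) := by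
  suffices ∃ g : (Fin (n + 1) → A) → (Fin n → A) × (Fin n → A),
      {e | rauzyAdj X n ε e.1 e.2} ⊆ g '' language X (n + 1) by
    obtain ⟨g, hg⟩ := this
    exact (Set.ncard_le_ncard hg).trans ((Set.ncard_image_le).trans_eq ncard_language)
  rcases Int.units_eq_one_or ε with rfl | rfl
  · refine ⟨fun w => (Fin.init w, Fin.tail w), ?_⟩
    rintro ⟨_, _⟩ ⟨x, hx, a, rfl, rfl⟩
    exact ⟨word x (n + 1) a, ⟨x, hx, a, rfl⟩, Prod.ext (init_word a) (tail_word a)⟩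
  · refine ⟨fun w => (Fin.tail w, Fin.init w), ?_⟩
    rintro ⟨_, _⟩ ⟨x, hx, a, rfl, rfl⟩
    refine ⟨word x (n + 1) (a - 1), ⟨x, hx, a - 1, rfl⟩, Prod.ext ?_ (init_word _)⟩
    exact (tail_word _).trans (by rw [sub_add_cancel])

theorem ncard_setOf_rauzyAdj_eq [Finite A] {ι : Type*} {u : ι → Fin n → A}
    (hu : Function.Injective u) (hB : ∀ i, Branches (rauzyAdj X n ε) (u i))
    (hP : complexity X (n + 1) ≤ complexity X n + Nat.card ι) (v : Fin n → A) :
    {w | rauzyAdj X n ε v w}.ncard =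
      (language X n).indicator 1 v + (Set.range u).indicator 1 v := by
  refine ncard_setOf_adj_eq ?_ ?_ (Set.forall_mem_range.2 hB) ?_ v
  · rintro _ ⟨x, hx, a, rfl⟩
    exact ⟨_, rauzyAdj_word hx a⟩
  · rintro _ ⟨i, rfl⟩
    obtain ⟨_, ⟨x, hx, a, ha, -⟩, -⟩ := hB i
    exact ⟨x, hx, a, ha⟩
  · rw [ncard_language, ← Nat.card_coe_set_eq (Set.range u), Nat.card_range_of_injective hu]
    exact (ncard_setOf_rauzyAdj_le X n ε).trans hP

theorem encard_setOf_rauzyAdj_le_two [Finite A] {ι : Type*} {u : ι → Fin n → A}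
    (hu : Function.Injective u) (hB : ∀ i, Branches (rauzyAdj X n ε) (u i))
    (hP : complexity X (n + 1) ≤ complexity X n + Nat.card ι) (v : Fin n → A) :
    {w | rauzyAdj X n ε v w}.encard ≤ 2 := by
  rw [← (Set.toFinite _).cast_ncard_eq, ncard_setOf_rauzyAdj_eq hu hB hP v]
  exact Nat.cast_le.2 <| add_le_add (Set.indicator_le_self' (fun _ _ => zero_le_one) v)
    (Set.indicator_le_self' (fun _ _ => zero_le_one) v)

theorem mem_range_of_branches [Finite A] {ι : Type*} {u : ι → Fin n → A}
    (hu : Function.Injective u) (hB : ∀ i, Branches (rauzyAdj X n ε) (u i))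
    (hP : complexity X (n + 1) ≤ complexity X n + Nat.card ι) {v : Fin n → A}
    (hv : Branches (rauzyAdj X n ε) v) : v ∈ Set.range u := by
  by_contra hvu
  have hlt := Set.one_lt_ncard_iff_nontrivial.2 hv
  rw [ncard_setOf_rauzyAdj_eq hu hB hP v, Set.indicator_of_notMem hvu, add_zero] at hlt
  exact hlt.not_ge (Set.indicator_le_self' (fun _ _ => zero_le_one) v)

theorem rauzyAdj_ray_right (hx : x ∈ X) (t : ℕ) :
    rauzyAdj X n 1 (word x n t) (word x n (t + 1 : ℕ)) := by
  exact_mod_cast rauzyAdj_word (ε := 1) hx t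

theorem rauzyAdj_ray_left (hx : x ∈ X) (L t : ℕ) :
    rauzyAdj X n (-1) (word x n (L - t)) (word x n (L - (t + 1 : ℕ))) := by
  convert rauzyAdj_word (ε := -1) hx (L - t : ℤ) using 2
  push_cast
  ring

theorem ncard_range_word_le [Finite A] (hx : x ∈ X) (n : ℕ) (g : ℕ → ℤ) :
    (Set.range fun t => word x n (g t)).ncard ≤ complexity X n := by
  rw [← ncard_language]
  refine Set.ncard_le_ncard ?_
  rintro _ ⟨t, rfl⟩
  exact ⟨x, hx, _, rfl⟩

theorem image_ray_left_eq_windowWords (x : ℤ → A) (n L : ℕ) :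
    (fun t : ℕ => word x n (L - t)) '' Set.Iic L = windowWords x n L := by
  have hreflect : (fun t => L - t) '' Set.Iic L = Set.Iic L := by
    ext t
    simp only [Set.mem_image, Set.mem_Iic]
    exact ⟨by omega, fun ht => ⟨L - t, by omega, by omega⟩⟩
  rw [windowWords, ← hreflect, Set.image_image, hreflect]
  exact Set.image_congr fun t ht => by rw [Nat.cast_sub ht, sub_sub_cancel]

theorem forall_word_mem_windowWords
    (hright : Set.range (fun t : ℕ => word x n t) ⊆ windowWords x n L)
    (hleft : Set.range (fun t : ℕ => word x n (L - t)) ⊆ windowWords x n L) (t : ℤ) :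
    word x n t ∈ windowWords x n L := by
  rcases le_total 0 t with ht | ht
  · lift t to ℕ using ht
    exact hright ⟨t, rfl⟩
  · exact hleft ⟨(L - t).toNat, by dsimp only; congr 1; omega⟩

theorem forall_word_mem_of_forall_not_branches [Finite A] (hx : x ∈ X) (hL : complexity X n ≤ L)
    (hB : ∀ ε, ∀ v ∈ windowWords x n L, ¬Branches (rauzyAdj X n ε) v) (t : ℤ) :
    word x n t ∈ windowWords x n L := by
  refine forall_word_mem_windowWords ?_ ?_ t
  · exact range_subset_of_forall_not_branches (rauzyAdj_ray_right hx) (Set.toFinite _)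
      ((ncard_range_word_le hx n _).trans hL) (hB 1)
  · have hB' := hB (-1)
    rw [← image_ray_left_eq_windowWords] at hB' ⊢
    exact range_subset_of_forall_not_branches (rauzyAdj_ray_left hx L) (Set.toFinite _)
      ((ncard_range_word_le hx n _).trans hL) hB'

theorem forall_word_mem_or_exists_period [Finite A] (hx : x ∈ X) (hn : 0 < n) {H : ℕ}
    (hQ : complexity X n ≤ Q) (h2 : ∀ ε v, {w | rauzyAdj X n ε v w}.encard ≤ 2)
    (hB : ∀ ε, {v ∈ windowWords x n (H + Q) | Branches (rauzyAdj X n ε) v}.Subsingleton) :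
    (∀ t : ℤ, word x n t ∈ windowWords x n (H + Q)) ∨
      ∃ p, 1 ≤ p ∧ p ≤ Q ∧ ∀ i : ℕ, Q ≤ i → i + p ≤ H → x ((i + p : ℕ) : ℤ) = x i := by
  have hfirst : ∀ a b : ℤ, word x n a = word x n b → x a = x b := fun a b h => by
    simpa using word_eq_word_iff.1 h 0 hn
  have hright := range_subset_or_exists_period (rauzyAdj_ray_right hx) (Set.toFinite _)
    ((ncard_range_word_le hx n _).trans hQ) (h2 1) (hB 1)
  have hleft := range_subset_or_exists_period (rauzyAdj_ray_left hx (H + Q)) (Set.toFinite _)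
    ((ncard_range_word_le hx n _).trans hQ) (h2 (-1))
    (by rw [image_ray_left_eq_windowWords]; exact hB (-1))
  rw [image_ray_left_eq_windowWords] at hleft
  rcases hright with hright | ⟨p, hp, hpQ, hper⟩
  · rcases hleft with hleft | ⟨p, hp, hpQ, hper⟩
    · exact Or.inl (forall_word_mem_windowWords hright hleft)
    · refine Or.inr ⟨p, hp, hpQ, fun i hi hiH => (hfirst _ _ ?_).symm⟩
      convert hper (H + Q - (i + p)) (by omega) (by omega) using 2 <;> omega
  · exact Or.inr ⟨p, hp, hpQ, fun i hi hiH => hfirst _ _ (hper i hi hiH)⟩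

theorem sub_mul_eq_of_sub_eq {M p : ℤ} (hp : 0 ≤ p) (h : ∀ i < M, x (i - p) = x i) {i : ℤ}
    (hi : i < M) (q : ℕ) : x (i - q * p) = x i := by
  induction q with
  | zero => simp
  | succ q ih =>
    rw [← ih, ← h (i - q * p) (by nlinarith [mul_nonneg q.cast_nonneg hp])]
    congr 1
    push_cast
    ring

theorem eventuallyPeriodic_of_frequently_sub_eq
    (h : ∃ᶠ n : ℕ in atTop, ∃ p : ℕ, 1 ≤ p ∧ ∀ i < (n : ℤ), x (i - p) = x i) :
    EventuallyPeriodic x := by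
  obtain ⟨n₀, p₀, hp₀, hper₀⟩ := h.exists
  have hper : ∀ i : ℤ, x (i - p₀) = x i := by
    intro i
    obtain ⟨n, hn, p, hp, hper⟩ := frequently_atTop.1 h (i + 1).toNat
    have hq : i - (i.toNat + 1 : ℕ) * (p : ℤ) < n₀ := by
      have : (i.toNat + 1 : ℕ) ≤ ((i.toNat + 1 : ℕ) : ℤ) * p :=
        le_mul_of_one_le_right (by omega) (by omega)
      omega
    calc x (i - p₀) = x (i - p₀ - (i.toNat + 1 : ℕ) * p) :=
          (sub_mul_eq_of_sub_eq (by omega) hper (by omega) _).symm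
      _ = x (i - (i.toNat + 1 : ℕ) * p - p₀) := by congr 1; ring
      _ = x (i - (i.toNat + 1 : ℕ) * p) := hper₀ _ hq
      _ = x i := sub_mul_eq_of_sub_eq (by omega) hper (by omega) _
  exact ⟨p₀, hp₀, 0, fun j _ => by rw [← hper (j + p₀), add_sub_cancel_right]⟩

theorem exists_branches_right [Finite A] (hx : x ∈ X) (hper : ¬EventuallyPeriodic x) (hn : 0 < n)
    (hQ : complexity X n ≤ Q) : ∃ v ∈ windowWords x n Q, Branches (rauzyAdj X n 1) v := by
  by_contra! hB
  obtain ⟨p, hp, hW⟩ := exists_period_of_forall_not_branches (rauzyAdj_ray_right hx)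
    (Set.toFinite _) ((ncard_range_word_le hx n _).trans hQ) hB
  refine hper ⟨p, hp, Q, fun j hj => ?_⟩
  lift j to ℕ using (Int.natCast_nonneg Q).trans hj
  simpa using word_eq_word_iff.1 (hW j (by exact_mod_cast hj)) 0 hn

theorem sub_eq_of_forall_not_branches_left [Finite A] (hx : x ∈ X) (hn : 0 < n)
    (hQ : complexity X n ≤ Q) (hB : ∀ v ∈ windowWords x n Q, ¬Branches (rauzyAdj X n (-1)) v) :
    ∃ p : ℕ, 1 ≤ p ∧ ∀ i < (n : ℤ), x (i - p) = x i := by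
  rw [← image_ray_left_eq_windowWords] at hB
  obtain ⟨p, hp, hW⟩ := exists_period_of_forall_not_branches (rauzyAdj_ray_left hx Q)
    (Set.toFinite _) ((ncard_range_word_le hx n _).trans hQ) hB
  refine ⟨p, hp, fun i hi => ?_⟩
  -- The position `i` lies in the word at `min i 0`.
  have := word_eq_word_iff.1 (hW (Q + (-i).toNat) (by omega)) i.toNat (by omega)
  convert this using 2 <;> push_cast <;> omega

theorem eventually_exists_branches [Finite A] (hx : x ∈ X) (hper : ¬EventuallyPeriodic x) {C : ℕ}
    (hC : ∀ᶠ n in atTop, complexity X n ≤ C * n) :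
    ∀ᶠ n in atTop, ∀ ε, ∃ v ∈ windowWords x n (C * n), Branches (rauzyAdj X n ε) v := by
  have hleft : ∀ᶠ n : ℕ in atTop, ¬∃ p : ℕ, 1 ≤ p ∧ ∀ i < (n : ℤ), x (i - p) = x i :=
    not_frequently.1 fun h => hper (eventuallyPeriodic_of_frequently_sub_eq h)
  filter_upwards [hC, hleft, eventually_gt_atTop 0] with n hCn hleftn hn ε
  rcases Int.units_eq_one_or ε with rfl | rfl
  · exact exists_branches_right hx hper hn hCn
  · by_contra! hB
    exact hleftn (sub_eq_of_forall_not_branches_left hx hn hCn hB)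

end Words

section WindowPeriods

theorem period_extend {α : Type*} {g : ℕ → α} {a a' b c p p' : ℕ}
    (hp : ∀ i, a ≤ i → i + p ≤ b → g (i + p) = g i)
    (hp' : ∀ i, a' ≤ i → i + p' ≤ c → g (i + p') = g i) (hpos : 1 ≤ p') (ha : a ≤ a')
    (hb : a' + p + p' ≤ b) (i : ℕ) (hi : a ≤ i) (hic : i + p ≤ c) : g (i + p) = g i := by
  induction i using Nat.strong_induction_on with
  | _ i ih =>
    rcases le_or_gt (i + p) b with hib | hib
    · exact hp i hi hib
    · calc g (i + p) = g (i - p' + p + p') := by congr 1; omega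
        _ = g (i - p' + p) := hp' _ (by omega) (by omega)
        _ = g (i - p') := ih _ (by omega) (by omega) (by omega)
        _ = g (i - p' + p') := (hp' _ (by omega) (by omega)).symm
        _ = g i := by congr 1; omega

theorem eventuallyPeriodic_of_window_periods {A : Type*} {x : ℤ → A} {M : ℕ}
    (h : ∀ᶠ N in atTop, ∃ p, 1 ≤ p ∧ p ≤ M * N ∧
      ∀ i : ℕ, M * N ≤ i → i + p ≤ 4 * M * N → x (i + p : ℕ) = x i) :
    EventuallyPeriodic x := by
  obtain ⟨n₀, hn₀⟩ := eventually_atTop.1 (h.and (eventually_ge_atTop 2))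
  obtain ⟨⟨p, hp, hpM, hper⟩, -⟩ := hn₀ n₀ le_rfl
  have key : ∀ N ≥ n₀, ∀ i : ℕ, M * n₀ ≤ i → i + p ≤ 4 * M * N → x (i + p : ℕ) = x i := by
    intro N hN
    induction N, hN using Nat.le_induction with
    | base => exact hper
    | succ N hN ih =>
      obtain ⟨⟨p', hp', hp'M, hper'⟩, -⟩ := hn₀ (N + 1) (by omega)
      have hpN : p ≤ M * N := hpM.trans (Nat.mul_le_mul_left M hN)
      have hM : M * 2 ≤ M * N := Nat.mul_le_mul_left M (hn₀ N hN).2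
      exact period_extend (g := fun i : ℕ => x i) ih hper' hp'
        (Nat.mul_le_mul_left M (by omega)) (by linarith)
  have hMpos : 1 ≤ M := Nat.pos_of_mul_pos_right (hp.trans hpM)
  refine ⟨p, hp, (M * n₀ : ℕ), fun j hj => ?_⟩
  lift j to ℕ using (Int.natCast_nonneg _).trans hj
  have hle : j + p + n₀ ≤ 4 * M * (j + p + n₀) := Nat.le_mul_of_pos_left _ (by omega)
  exact_mod_cast key (j + p + n₀) (by omega) j (by exact_mod_cast hj) (by omega)

end WindowPeriods

section Growth

theorem exists_lt_eventually_le_mul_of_limsup_lt {f : ℕ → ℕ} {k : ℕ}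
    (h : limsup (fun n : ℕ => (f n : ℝ≥0∞) / n) atTop < k) :
    ∃ c : ℝ, c < k ∧ ∀ᶠ n in atTop, (f n : ℝ) ≤ c * n := by
  obtain ⟨c, hc, hck⟩ := exists_between h
  lift c to NNReal using hck.ne_top
  refine ⟨c, by exact_mod_cast hck, ?_⟩
  filter_upwards [eventually_lt_of_limsup_lt hc, eventually_gt_atTop 0] with n hn hn0
  have hle : (f n : ℝ≥0∞) ≤ c * n :=
    (ENNReal.div_le_iff (by exact_mod_cast hn0.ne') (ENNReal.natCast_ne_top n)).1 hn.le
  exact_mod_cast hle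

theorem mul_le_of_forall_add_le_succ {f : ℕ → ℕ} {k N m : ℕ}
    (h : ∀ n, N ≤ n → n < N + m → f n + k ≤ f (n + 1)) : k * m ≤ f (N + m) := by
  induction m with
  | zero => exact Nat.zero_le _
  | succ m ih =>
    have := ih fun n hn hnm => h n hn (by omega)
    have := h (N + m) (by omega) (by omega)
    rw [mul_add, mul_one, ← add_assoc]
    omega

theorem exists_eventually_exists_succ_lt_add {f : ℕ → ℕ} {k : ℕ} {c : ℝ} (hck : c < k)
    (hc : ∀ᶠ n in atTop, (f n : ℝ) ≤ c * n) :
    ∃ R : ℕ, ∀ᶠ N in atTop, ∃ n, N ≤ n ∧ n ≤ R * N ∧ f (n + 1) < f n + k := by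
  obtain ⟨R, hR⟩ := exists_nat_gt (k / (k - c))
  rw [div_lt_iff₀ (sub_pos.2 hck)] at hR
  obtain ⟨n₀, hn₀⟩ := eventually_atTop.1 hc
  refine ⟨R + 1, eventually_atTop.2 ⟨n₀ + 1, fun N hN => ?_⟩⟩
  by_contra! hgrow
  have hkm : k * (R * N) ≤ f (N + R * N) :=
    mul_le_of_forall_add_le_succ fun n hn hnR => hgrow n hn (by linarith)
  have hle : (k : ℝ) * (R * N) ≤ c * (N + R * N) :=
    (by exact_mod_cast hkm : (k : ℝ) * (R * N) ≤ f (N + R * N)).trans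
      (by exact_mod_cast hn₀ (N + R * N) (by omega))
  have hNpos : (0 : ℝ) < N := by exact_mod_cast (by omega : 0 < N)
  nlinarith [mul_lt_mul_of_pos_right hR hNpos, mul_lt_mul_of_pos_right hck hNpos]

end Growth

section BirkhoffSums

theorem exists_forall_abs_birkhoffSum_sub_le {α : Type*} {T : α → α} {g : α → ℝ} {x : α} {a : ℝ}
    (h : Tendsto (fun n : ℕ => birkhoffSum T g n x / n) atTop (nhds a)) {ε : ℝ} (hε : 0 < ε) :
    ∃ C, ∀ n : ℕ, |birkhoffSum T g n x - n * a| ≤ ε * n + C := by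
  obtain ⟨N, hN⟩ := Metric.tendsto_atTop.1 h ε hε
  refine ⟨∑ n ∈ Finset.range (N + 1), |birkhoffSum T g n x - n * a|, fun n => ?_⟩
  rcases lt_or_ge N n with hn | hn
  · have hpos : (0 : ℝ) < n := by exact_mod_cast N.zero_le.trans_lt hn
    have hdiv := (hN n hn.le).le
    rw [Real.dist_eq, div_sub' hpos.ne', abs_div, abs_of_pos hpos, div_le_iff₀ hpos] at hdiv
    exact hdiv.trans (le_add_of_nonneg_right (Finset.sum_nonneg fun _ _ => abs_nonneg _))
  · exact (Finset.single_le_sum (f := fun n : ℕ => |birkhoffSum T g n x - n * a|)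
      (fun _ _ => abs_nonneg _) (Finset.mem_range_succ_iff.2 hn)).trans
      (le_add_of_nonneg_left (by positivity))

theorem eventually_forall_abs_birkhoffSum_iterate_sub_le {α : Type*} {T : α → α} {g : α → ℝ}
    {x : α} {a : ℝ} (h : Tendsto (fun n : ℕ => birkhoffSum T g n x / n) atTop (nhds a)) (K : ℕ)
    {ε : ℝ} (hε : 0 < ε) :
    ∀ᶠ n : ℕ in atTop, ∀ t ≤ K * n, |birkhoffSum T g n (T^[t] x) - n * a| ≤ ε * n := by
  obtain ⟨C, hC⟩ := exists_forall_abs_birkhoffSum_sub_le h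
    (show 0 < ε / (2 * (2 * K + 1)) by positivity)
  set e := ε / (2 * (2 * K + 1)) with he
  have hεe : ε = e * (2 * (2 * K + 1)) := by rw [he]; field_simp
  filter_upwards [eventually_ge_atTop ⌈4 * C / ε⌉₊] with n hn t ht
  have hCn : 4 * C ≤ ε * n := by rw [← div_le_iff₀' hε]; exact Nat.ceil_le.1 hn
  have htn : e * t ≤ e * (K * n) := by gcongr; exact_mod_cast ht
  have hsplit : birkhoffSum T g n (T^[t] x) - n * a =
      (birkhoffSum T g (t + n) x - (t + n : ℕ) * a) - (birkhoffSum T g t x - t * a) := by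
    rw [birkhoffSum_add]
    push_cast
    ring
  calc |birkhoffSum T g n (T^[t] x) - n * a|
      ≤ (e * (t + n : ℕ) + C) + (e * t + C) := by
        rw [hsplit]
        exact (abs_sub _ _).trans (add_le_add (hC _) (hC _))
    _ ≤ ε * n := by
        rw [hεe] at hCn ⊢
        push_cast
        linarith

variable {A : Type*} {f : (ℤ → A) → ℝ} {M n : ℕ} {x y z : ℤ → A}

theorem shift_iterate (n : ℕ) (x : ℤ → A) : shift^[n] x = fun i => x (i + n) := by
  induction n with
  | zero => simp
  | succ n ih =>
    rw [Function.iterate_succ_apply', ih]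
    ext i
    simp only [shift, Nat.cast_add, Nat.cast_one]
    congr 1
    ring

theorem word_shift_iterate (s : ℕ) (x : ℤ → A) (n : ℕ) :
    word (shift^[s] x) n 0 = word x n s := by
  rw [shift_iterate]
  exact word_eq_word_iff.2 fun i _ => by congr 1; ring

theorem abs_birkhoffSum_sub_le_of_word_eq (h01 : ∀ z, f z ∈ Set.Icc 0 1)
    (hf : DependsOn f (Set.Icc (-M : ℤ) M)) (h : word y n 0 = word z n 0) :
    |birkhoffSum shift f n y - birkhoffSum shift f n z| ≤ 2 * M := by
  set E := Finset.range M ∪ Finset.Ico (n - M) n with hE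
  have hterm : ∀ j ∈ Finset.range n,
      |f (shift^[j] y) - f (shift^[j] z)| ≤ if j ∈ E then 1 else 0 := by
    intro j hj
    split_ifs with hjE
    · exact abs_sub_le_of_le_of_le (h01 _).1 (h01 _).2 (h01 _).1 (h01 _).2 |>.trans_eq (sub_zero 1)
    · rw [hf fun i hi => ?_, sub_self, abs_zero]
      simp only [hE, Finset.mem_union, Finset.mem_range, Finset.mem_Ico, Set.mem_Icc] at hj hjE hi
      have := word_eq_word_iff.1 h (i + j).toNat (by omega)
      rw [shift_iterate, shift_iterate]
      convert this using 2 <;> omega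
  have hcard : E.card ≤ 2 * M := by
    refine (Finset.card_union_le _ _).trans ?_
    rw [Finset.card_range, Nat.card_Ico]
    omega
  calc |birkhoffSum shift f n y - birkhoffSum shift f n z|
      = |∑ j ∈ Finset.range n, (f (shift^[j] y) - f (shift^[j] z))| := by
        rw [birkhoffSum, birkhoffSum, Finset.sum_sub_distrib]
    _ ≤ ∑ j ∈ Finset.range n, if j ∈ E then 1 else 0 :=
        (Finset.abs_sum_le_sum_abs _ _).trans (Finset.sum_le_sum hterm)
    _ ≤ E.card := by
        rw [Finset.sum_boole]
        exact_mod_cast Finset.card_le_card fun j hj => (Finset.mem_filter.1 hj).2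
    _ ≤ 2 * M := by exact_mod_cast hcard

end BirkhoffSums

section OrbitClosure

variable {A : Type*} [TopologicalSpace A] {x : ℤ → A}

theorem continuous_of_dependsOn_finite {ι β : Type*} [DiscreteTopology A] [TopologicalSpace β]
    [Nonempty β] {f : (ι → A) → β} {I : Set ι} (hI : I.Finite) (hf : DependsOn f I) :
    Continuous f := by
  have := hI.to_subtype
  obtain ⟨g, rfl⟩ := dependsOn_iff_exists_comp.1 hf
  exact continuous_of_discreteTopology.comp (by fun_prop)

theorem continuous_shift : Continuous (shift : (ℤ → A) → ℤ → A) :=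
  continuous_pi fun i => continuous_apply (i + 1)

theorem shift_iterate_mem_orbitClosure (x : ℤ → A) (n : ℕ) : shift^[n] x ∈ orbitClosure x :=
  subset_closure ⟨n, shift_iterate n x⟩

theorem exists_word_eq_of_mem_orbitClosure [DiscreteTopology A] {z : ℤ → A}
    (hz : z ∈ orbitClosure x) (n : ℕ) : ∃ t : ℤ, word z n 0 = word x n t := by
  have hcont : Continuous fun z : ℤ → A => word z n 0 := by unfold word; fun_prop
  obtain ⟨_, hy, t, rfl⟩ := mem_closure_iff.1 hz _
    ((isOpen_discrete {word z n 0}).preimage hcont) rfl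
  refine ⟨t, Eq.trans (Eq.symm hy) ?_⟩
  exact word_eq_word_iff.2 fun i _ => by congr 1; ring

theorem add_mul_eq_of_add_eq {A : Type*} {x : ℤ → A} {p : ℕ} {T : ℤ}
    (h : ∀ j ≥ T, x (j + p) = x j) {j : ℤ} (hj : T ≤ j) (m : ℕ) : x (j + m * p) = x j := by
  induction m with
  | zero => simp
  | succ m ih =>
    rw [← ih, ← h (j + m * p) (hj.trans (le_add_of_nonneg_right (by positivity)))]
    congr 1
    push_cast
    ring

theorem EventuallyPeriodic.exists_finite_tendsto_nhdsSet (h : EventuallyPeriodic x) :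
    ∃ F : Set (ℤ → A), F.Finite ∧ Tendsto (fun n => shift^[n] x) atTop (nhdsSet F) := by
  obtain ⟨p, hp, T, hper⟩ := h
  let y : ℕ → ℤ → A := fun r i => x (T + (i + r - T) % p)
  have hlim : ∀ r, Tendsto (fun m : ℕ => shift^[p * m + r] x) atTop (nhds (y r)) := by
    intro r
    refine tendsto_pi_nhds.2 fun i => tendsto_nhds_of_eventually_eq ?_
    filter_upwards [eventually_ge_atTop (T - i - r).toNat] with m hm
    have hdiv := Int.emod_add_mul_ediv (i + r - T) p
    have hmod : 0 ≤ (i + r - T) % p := Int.emod_nonneg _ (by omega)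
    have hq : 0 ≤ (i + r - T) / p + m := by
      have hneg : (-m : ℤ) ≤ (i + r - T) / p := by
        refine (Int.le_ediv_iff_mul_le (by omega)).2 ?_
        have : (m : ℤ) ≤ m * p := le_mul_of_one_le_right (by positivity) (by exact_mod_cast hp)
        have := Int.self_le_toNat (T - i - r)
        linarith [(Nat.cast_le (α := ℤ)).2 hm]
      linarith
    rw [shift_iterate]
    change x (i + (p * m + r : ℕ)) = x (T + (i + r - T) % p)
    rw [← add_mul_eq_of_add_eq hper (show T ≤ T + (i + r - T) % p by omega)
      ((i + r - T) / p + m).toNat, Int.toNat_of_nonneg hq]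
    congr 1
    push_cast
    linarith
  refine ⟨y '' Set.Iio p, (Set.finite_Iio p).image y, fun U hU => ?_⟩
  have hU' : ∀ᶠ m in atTop, ∀ r ∈ Set.Iio p, shift^[p * m + r] x ∈ U :=
    (eventually_all_finite (Set.finite_Iio p)).2 fun r hr =>
      hlim r (mem_nhdsSet_iff_forall.1 hU _ (Set.mem_image_of_mem y hr))
  change ∀ᶠ n in atTop, shift^[n] x ∈ U
  filter_upwards [(Nat.tendsto_div_const_atTop (by omega : p ≠ 0)).eventually hU'] with n hn
  simpa only [Nat.div_add_mod] using hn (n % p) (Nat.mod_lt n hp)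

end OrbitClosure

section ShiftMeasures

variable {A : Type*} [MeasurableSpace A] {μ ν : Measure (ℤ → A)}

theorem exists_dependsOn_integral_ne_s2 [IsProbabilityMeasure μ] [IsProbabilityMeasure ν]
    (h : μ ≠ ν) : ∃ (f : (ℤ → A) → ℝ) (M : ℕ), (∀ z, f z ∈ Set.Icc 0 1) ∧
      DependsOn f (Set.Icc (-M : ℤ) M) ∧ ∫ z, f z ∂μ ≠ ∫ z, f z ∂ν := by
  by_contra! heq
  refine h (ext_of_generate_finite _ generateFrom_measurableCylinders.symm
    isPiSystem_measurableCylinders (fun s hs => ?_) (by simp only [measure_univ]))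
  obtain ⟨I, S, hS, rfl⟩ := (mem_measurableCylinders _).1 hs
  have hI : (I : Set ℤ) ⊆ Set.Icc (-(I.sup Int.natAbs : ℕ) : ℤ) (I.sup Int.natAbs : ℕ) := by
    intro i hi
    have := Finset.le_sup (f := Int.natAbs) hi
    simp only [Set.mem_Icc]
    omega
  have hint := heq ((cylinder I S).indicator fun _ => 1) _
    (fun z => ⟨Set.indicator_nonneg (fun _ _ => zero_le_one) z,
      Set.indicator_le_self' (fun _ _ => zero_le_one) z⟩)
    (.mono hI (dependsOn_cylinder_indicator_const (α := fun _ => A) S (1 : ℝ)))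
  rw [integral_indicator_const _ hS.cylinder, integral_indicator_const _ hS.cylinder, smul_eq_mul,
    smul_eq_mul, mul_one, mul_one] at hint
  exact (measureReal_eq_measureReal_iff).1 hint

theorem measurable_shift : Measurable (shift : (ℤ → A) → ℤ → A) :=
  measurable_pi_lambda _ fun i => measurable_pi_apply (i + 1)

end ShiftMeasures

theorem integral_birkhoffSum {α : Type*} [MeasurableSpace α] {μ : Measure α} {T : α → α}
    (hT : MeasurePreserving T μ μ) {f : α → ℝ} (hf : Integrable f μ) (n : ℕ) :
    ∫ z, birkhoffSum T f n z ∂μ = n * ∫ z, f z ∂μ := by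
  have hterm : ∀ j, ∫ z, f (T^[j] z) ∂μ = ∫ z, f z ∂μ := fun j => by
    have hTj := hT.iterate j
    rw [← integral_map hTj.aemeasurable (hTj.map_eq.symm ▸ hf.aestronglyMeasurable), hTj.map_eq]
  simp only [birkhoffSum]
  have hint : ∀ j ∈ Finset.range n, Integrable (fun z => f (T^[j] z)) μ := fun j _ =>
    (hT.iterate j).integrable_comp_of_integrable hf
  rw [integral_finsetSum _ hint]
  simp only [hterm, Finset.sum_const, Finset.card_range, nsmul_eq_mul]

section GenericPoints

variable {A : Type*} [TopologicalSpace A] [MeasurableSpace A] {μ ν : Measure (ℤ → A)}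
  {f : (ℤ → A) → ℝ} {M : ℕ} {x y : ℤ → A}

theorem IsGenericPt.isProbabilityMeasure_s2 (h : IsGenericPt μ x) : IsProbabilityMeasure μ := by
  have hone : Tendsto (fun N : ℕ => (∑ _n ∈ Finset.range N, (1 : ℝ)) / N) atTop (nhds 1) := by
    refine tendsto_const_nhds.congr' ?_
    filter_upwards [eventually_ne_atTop 0] with N hN
    simp [hN]
  have hreal := tendsto_nhds_unique (h (fun _ => 1) continuous_const) hone
  rw [integral_const, smul_eq_mul, mul_one] at hreal
  exact ⟨by rw [← ENNReal.toReal_eq_one_iff]; exact hreal⟩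

theorem IsGenericPt.tendsto_birkhoffAverage (hx : IsGenericPt μ x) (hf : Continuous f) :
    Tendsto (birkhoffAverage ℝ shift f · x) atTop (nhds (∫ y, f y ∂μ)) :=
  (hx f hf).congr fun n => by rw [birkhoffAverage, birkhoffSum, smul_eq_mul, inv_mul_eq_div]

variable [DiscreteTopology A]

theorem IsGenericPt.eventually_abs_birkhoffSum_sub_le_s2 (hx : IsGenericPt μ x)
    (h01 : ∀ z, f z ∈ Set.Icc 0 1) (hf : DependsOn f (Set.Icc (-M : ℤ) M)) (K : ℕ) {δ : ℝ}
    (hδ : 0 < δ) :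
    ∀ᶠ n : ℕ in atTop, ∀ z, word z n 0 ∈ windowWords x n (K * n) →
      |birkhoffSum shift f n z - n * ∫ y, f y ∂μ| ≤ δ * n := by
  have hlim := hx f (continuous_of_dependsOn_finite (Set.finite_Icc _ _) hf)
  filter_upwards [eventually_forall_abs_birkhoffSum_iterate_sub_le (T := shift) hlim K
    (half_pos hδ), eventually_ge_atTop ⌈4 * M / δ⌉₊] with n hn hnM
  rintro z ⟨s, hs, hsz⟩
  have hM : 4 * M ≤ δ * n := by rw [← div_le_iff₀' hδ]; exact Nat.ceil_le.1 hnM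
  have hcmp := abs_birkhoffSum_sub_le_of_word_eq (y := z) h01 hf
    (hsz.symm.trans (word_shift_iterate s x n).symm)
  calc |birkhoffSum shift f n z - n * ∫ y, f y ∂μ|
      ≤ 2 * M + δ / 2 * n := (abs_sub_le _ _ _).trans (add_le_add hcmp (hn s hs))
    _ ≤ δ * n := by linarith

theorem IsGenericPt.eventually_disjoint_windowWords (hx : IsGenericPt μ x)
    (hy : IsGenericPt ν y) (h : μ ≠ ν) (K : ℕ) :
    ∀ᶠ n in atTop, Disjoint (windowWords x n (K * n)) (windowWords y n (K * n)) := by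
  have := hx.isProbabilityMeasure_s2
  have := hy.isProbabilityMeasure_s2
  obtain ⟨f, M, h01, hf, hne⟩ := exists_dependsOn_integral_ne_s2 h
  set a := ∫ z, f z ∂μ
  set b := ∫ z, f z ∂ν
  have hpos : 0 < |a - b| := abs_pos.2 (sub_ne_zero.2 hne)
  filter_upwards [hx.eventually_abs_birkhoffSum_sub_le_s2 h01 hf K (div_pos hpos three_pos),
    hy.eventually_abs_birkhoffSum_sub_le_s2 h01 hf K (div_pos hpos three_pos),
    eventually_gt_atTop 0] with n hxn hyn hn
  refine Set.disjoint_left.2 fun w hwx hwy => ?_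
  obtain ⟨s, -, hsw⟩ := id hwx
  have hz : word (shift^[s] x) n 0 = w := (word_shift_iterate s x n).trans hsw
  have hx' := hxn (shift^[s] x) (hz ▸ hwx)
  have hy' := hyn (shift^[s] x) (hz ▸ hwy)
  have hle : n * |a - b| ≤ |a - b| / 3 * n + |a - b| / 3 * n := by
    calc n * |a - b| = |n * a - n * b| := by rw [← mul_sub, abs_mul, Nat.abs_cast]
      _ ≤ _ := (abs_sub_le _ (birkhoffSum shift f n (shift^[s] x)) _).trans
        (add_le_add (by rwa [abs_sub_comm]) hy')
  nlinarith [mul_pos (show (0 : ℝ) < n by exact_mod_cast hn) hpos]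

variable [Countable A] [BorelSpace A]

theorem IsGenericPt.map_shift (hx : IsGenericPt μ x) : μ.map shift = μ := by
  have := hx.isProbabilityMeasure_s2
  have := Measure.isProbabilityMeasure_map (μ := μ) measurable_shift.aemeasurable
  refine ext_of_forall_integral_eq_of_IsFiniteMeasure fun f => ?_
  rw [integral_map measurable_shift.aemeasurable f.continuous.aestronglyMeasurable]
  have hdiff := tendsto_birkhoffAverage_apply_sub_birkhoffAverage' ℝ f.isBounded_range shift x
  have hshift : ∀ n, birkhoffAverage ℝ shift f n (shift x) =
      birkhoffAverage ℝ shift (f ∘ shift) n x := fun n => by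
    simp only [birkhoffAverage, birkhoffSum, Function.comp_apply, ← Function.iterate_succ_apply,
      ← Function.iterate_succ_apply']
  simp only [hshift] at hdiff
  exact sub_eq_zero.1 (tendsto_nhds_unique ((hx.tendsto_birkhoffAverage
    (f.continuous.comp continuous_shift)).sub (hx.tendsto_birkhoffAverage f.continuous)) hdiff)

theorem IsGenericPt.measure_eq_one_of_tendsto_nhdsSet (hx : IsGenericPt μ x) {F : Set (ℤ → A)}
    (hF : IsClosed F) (h : Tendsto (fun n => shift^[n] x) atTop (nhdsSet F)) : μ F = 1 := by
  have := hx.isProbabilityMeasure_s2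
  have hone : ∀ k, ∫⁻ z, hF.apprSeq k z ∂μ = 1 := by
    intro k
    have hcont : Continuous fun z => (hF.apprSeq k z : ℝ) := by fun_prop
    have hlim : Tendsto (fun n => (hF.apprSeq k (shift^[n] x) : ℝ)) atTop (nhds 1) := by
      refine tendsto_nhds.2 fun U hU h1 => h ((hU.preimage hcont).mem_nhdsSet.2 fun z hz => ?_)
      simpa [HasOuterApproxClosed.apprSeq_apply_eq_one hF k hz] using h1
    have hint := tendsto_nhds_unique (hx.tendsto_birkhoffAverage hcont) (hlim.cesaro_smul)
    rw [← BoundedContinuousFunction.toReal_lintegral_coe_eq_integral] at hint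
    exact (ENNReal.toReal_eq_one_iff _).1 hint
  exact tendsto_nhds_unique (HasOuterApproxClosed.tendsto_lintegral_apprSeq hF μ)
    (by simp only [hone]; exact tendsto_const_nhds)

theorem IsGenericPt.measure_orbitClosure (hx : IsGenericPt μ x) : μ (orbitClosure x) = 1 :=
  hx.measure_eq_one_of_tendsto_nhdsSet isClosed_closure <|
    (tendsto_principal.2 (Eventually.of_forall (shift_iterate_mem_orbitClosure x))).mono_right
      principal_le_nhdsSet

theorem IsGenericPt.not_eventuallyPeriodic [NullSingletonClass μ] (hx : IsGenericPt μ x) :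
    ¬EventuallyPeriodic x := by
  intro h
  obtain ⟨F, hF, hlim⟩ := h.exists_finite_tendsto_nhdsSet
  exact zero_ne_one ((hF.measure_zero μ).symm.trans
    (hx.measure_eq_one_of_tendsto_nhdsSet hF.isClosed hlim))

theorem IsGenericPt.eventually_exists_word_notMem (hx : IsGenericPt μ x)
    (hnue : ¬UniquelyErgodicOn (orbitClosure x)) (K : ℕ) :
    ∀ᶠ n in atTop, ∃ t : ℤ, word x n t ∉ windowWords x n (K * n) := by
  have := hx.isProbabilityMeasure_s2
  obtain ⟨ν, ⟨hνprob, hνinv, hνX⟩, hνμ⟩ : ∃ ν : Measure (ℤ → A),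
      (IsProbabilityMeasure ν ∧ ν.map shift = ν ∧ ν (orbitClosure x) = 1) ∧ ν ≠ μ := by
    by_contra! hunique
    exact hnue ⟨μ, ⟨this, hx.map_shift, hx.measure_orbitClosure⟩, hunique⟩
  obtain ⟨f, M, h01, hf, hne⟩ := exists_dependsOn_integral_ne_s2 hνμ
  set a := ∫ z, f z ∂ν
  set b := ∫ z, f z ∂μ
  have hpos : 0 < |a - b| := abs_pos.2 (sub_ne_zero.2 hne)
  have hcont := continuous_of_dependsOn_finite (Set.finite_Icc _ _) hf
  have hint : Integrable f ν := .of_bound hcont.aestronglyMeasurable 1 <|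
    .of_forall fun z => abs_le.2 ⟨by linarith [(h01 z).1], (h01 z).2⟩
  have hT : MeasurePreserving shift ν ν := ⟨measurable_shift, hνinv⟩
  filter_upwards [hx.eventually_abs_birkhoffSum_sub_le_s2 h01 hf K (half_pos hpos),
    eventually_gt_atTop 0] with n hn hn0
  by_contra! hcover
  have hae : ∀ᵐ z ∂ν, ‖birkhoffSum shift f n z - n * b‖ ≤ |a - b| / 2 * n := by
    filter_upwards [(mem_ae_iff_prob_eq_one isClosed_closure.measurableSet).2 hνX] with z hz
    obtain ⟨t, ht⟩ := exists_word_eq_of_mem_orbitClosure hz n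
    exact hn z (ht ▸ hcover t)
  have hle : n * |a - b| ≤ |a - b| / 2 * n := by
    calc n * |a - b| = ‖∫ z, (birkhoffSum shift f n z - n * b) ∂ν‖ := by
          rw [integral_sub ?_ (integrable_const _), integral_birkhoffSum hT hint, integral_const,
            probReal_univ, one_smul, ← mul_sub, Real.norm_eq_abs, abs_mul, Nat.abs_cast]
          exact integrable_finsetSum _ fun j _ => (hT.iterate j).integrable_comp_of_integrable hint
      _ ≤ |a - b| / 2 * n := by simpa using norm_integral_le_of_norm_le_const hae
  nlinarith [mul_pos (show (0 : ℝ) < n by exact_mod_cast hn0) hpos]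

end GenericPoints

section GenericFamilies

variable {A : Type*} [Finite A] [TopologicalSpace A] [DiscreteTopology A] [MeasurableSpace A]
  [BorelSpace A] {X : Set (ℤ → A)} {K k R : ℕ} {μ : Measure (ℤ → A)} {x : ℤ → A}
  {ι : Type*} [Finite ι] {ν : ι → Measure (ℤ → A)} {y : ι → ℤ → A}

theorem eventually_exists_injective_branches (hν : Function.Injective ν)
    [∀ i, NullSingletonClass (ν i)] (hyX : ∀ i, y i ∈ X) (hy : ∀ i, IsGenericPt (ν i) (y i))
    (hK : ∀ᶠ n in atTop, complexity X n ≤ K * n) :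
    ∀ᶠ n in atTop, ∀ ε, ∃ u : ι → Fin n → A, Function.Injective u ∧
      ∀ i, u i ∈ windowWords (y i) n (K * n) ∧ Branches (rauzyAdj X n ε) (u i) := by
  have hdisj : ∀ᶠ n in atTop, ∀ i j, i ≠ j →
      Disjoint (windowWords (y i) n (K * n)) (windowWords (y j) n (K * n)) :=
    eventually_all.2 fun i => eventually_all.2 fun j => by
      by_cases hij : i = j
      · exact .of_forall fun _ h => absurd hij h
      · exact ((hy i).eventually_disjoint_windowWords (hy j) (hν.ne hij) K).mono fun _ h _ => h
  filter_upwards [hdisj, eventually_all.2 fun i =>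
    eventually_exists_branches (hyX i) (hy i).not_eventuallyPeriodic hK] with n hn hbranch ε
  choose u hu hB using fun i => hbranch i ε
  refine ⟨u, fun i j hij => ?_, fun i => ⟨hu i, hB i⟩⟩
  by_contra hne
  exact Set.disjoint_left.1 (hn i j hne) (hu i) (hij ▸ hu j)

theorem eventually_branches_of_isGenericPt (hν : Function.Injective ν)
    [∀ i, NullSingletonClass (ν i)] (hyX : ∀ i, y i ∈ X) (hy : ∀ i, IsGenericPt (ν i) (y i))
    (hK : ∀ᶠ n in atTop, complexity X n ≤ K * n) (hx : IsGenericPt μ x) :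
    ∀ᶠ n in atTop, complexity X (n + 1) ≤ complexity X n + Nat.card ι → ∀ ε,
      (∀ v, {w | rauzyAdj X n ε v w}.encard ≤ 2) ∧
      {v ∈ windowWords x n (K * n) | Branches (rauzyAdj X n ε) v}.Subsingleton ∧
      ∀ v ∈ windowWords x n (K * n), Branches (rauzyAdj X n ε) v → μ ∈ Set.range ν := by
  have hdisj : ∀ᶠ n in atTop, ∀ i, μ ≠ ν i →
      Disjoint (windowWords x n (K * n)) (windowWords (y i) n (K * n)) :=
    eventually_all.2 fun i => by
      by_cases hi : μ = ν i
      · exact .of_forall fun _ h => absurd hi h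
      · exact (hx.eventually_disjoint_windowWords (hy i) hi K).mono fun _ h _ => h
  filter_upwards [hdisj, eventually_exists_injective_branches hν hyX hy hK] with n hn hbranch hP ε
  obtain ⟨u, hu, huB⟩ := hbranch ε
  have hB : ∀ i, Branches (rauzyAdj X n ε) (u i) := fun i => (huB i).2
  have hspecial : ∀ v ∈ windowWords x n (K * n), Branches (rauzyAdj X n ε) v →
      ∃ i, u i = v ∧ μ = ν i := by
    intro v hv hvB
    obtain ⟨i, rfl⟩ := mem_range_of_branches hu hB hP hvB
    refine ⟨i, rfl, ?_⟩
    by_contra hi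
    exact Set.disjoint_left.1 (hn i hi) hv (huB i).1
  refine ⟨encard_setOf_rauzyAdj_le_two hu hB hP, ?_, fun v hv hvB => ?_⟩
  · rintro v ⟨hv, hvB⟩ w ⟨hw, hwB⟩
    obtain ⟨i, rfl, hi⟩ := hspecial v hv hvB
    obtain ⟨j, rfl, hj⟩ := hspecial w hw hwB
    rw [hν (hi.symm.trans hj)]
  · obtain ⟨i, -, hi⟩ := hspecial v hv hvB
    exact ⟨i, hi.symm⟩

theorem eventuallyPeriodic_of_not_uniquelyErgodicOn (hν : Function.Injective ν)
    [∀ i, NullSingletonClass (ν i)] (hyX : ∀ i, y i ∈ X) (hy : ∀ i, IsGenericPt (ν i) (y i))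
    (hk : ∀ᶠ n in atTop, complexity X n ≤ k * n)
    (hP : ∀ᶠ N in atTop, ∃ n, N ≤ n ∧ n ≤ R * N ∧
      complexity X (n + 1) ≤ complexity X n + Nat.card ι)
    (hxX : x ∈ X) (hx : IsGenericPt μ x) (hnue : ¬UniquelyErgodicOn (orbitClosure x)) :
    EventuallyPeriodic x := by
  have hK : ∀ᶠ n in atTop, complexity X n ≤ (4 * (k * R) + k) * n :=
    hk.mono fun n hn => hn.trans (Nat.mul_le_mul_right n (Nat.le_add_left _ _))
  have hwindow := eventually_forall_ge_atTop.2
    (((eventually_branches_of_isGenericPt hν hyX hy hK hx).and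
      (hx.eventually_exists_word_notMem hnue (4 * (k * R) + k))).and
        (hk.and (eventually_gt_atTop 0)))
  refine eventuallyPeriodic_of_window_periods (M := k * R) ?_
  filter_upwards [hP, hwindow] with N ⟨n, hNn, hnN, hPn⟩ hn
  obtain ⟨⟨hbranch, t, ht⟩, hkn, hn0⟩ := hn n hNn
  rw [add_mul] at hbranch ht
  rcases forall_word_mem_or_exists_period hxX hn0 hkn (fun ε => (hbranch hPn ε).1)
    (fun ε => (hbranch hPn ε).2.1) with hcover | ⟨p, hp, hpn, hper⟩
  · exact absurd (hcover t) ht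
  · have hkR : k * n ≤ k * R * N := by
      rw [mul_assoc]
      exact Nat.mul_le_mul_left k hnN
    have hH : 4 * (k * R) * N ≤ 4 * (k * R) * n := Nat.mul_le_mul_left _ hNn
    exact ⟨p, hp, hpn.trans hkR, fun i hi hiN => hper i (hkR.trans hi) (by linarith)⟩

theorem card_add_two_le_of_isGenericPt (hν : Function.Injective ν)
    [∀ i, NullSingletonClass (ν i)] (hyX : ∀ i, y i ∈ X) (hy : ∀ i, IsGenericPt (ν i) (y i))
    (hcomp : limsup (fun n : ℕ => (complexity X n : ℝ≥0∞) / n) atTop < k)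
    (hxX : x ∈ X) (hx : IsGenericPt μ x) (hnue : ¬UniquelyErgodicOn (orbitClosure x)) :
    Nat.card ι + 2 ≤ k := by
  by_contra! hlt
  obtain ⟨c, hck, hc⟩ := exists_lt_eventually_le_mul_of_limsup_lt hcomp
  have hk : ∀ᶠ n in atTop, complexity X n ≤ k * n := hc.mono fun n hn => by
    exact_mod_cast hn.trans (mul_le_mul_of_nonneg_right hck.le n.cast_nonneg)
  obtain ⟨R, hR⟩ := exists_eventually_exists_succ_lt_add hck hc
  have hP : ∀ᶠ N in atTop, ∃ n, N ≤ n ∧ n ≤ R * N ∧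
      complexity X (n + 1) ≤ complexity X n + Nat.card ι :=
    hR.mono fun N ⟨n, hNn, hnN, hn⟩ => ⟨n, hNn, hnN, by omega⟩
  have hper := eventuallyPeriodic_of_not_uniquelyErgodicOn hν hyX hy hk hP hxX hx hnue
  have hμ : μ ∉ Set.range ν := by
    rintro ⟨i, rfl⟩
    exact hx.not_eventuallyPeriodic hper
  have hwindow := eventually_forall_ge_atTop.2
    (((eventually_branches_of_isGenericPt hν hyX hy hk hx).and
      (hx.eventually_exists_word_notMem hnue k)).and hk)
  obtain ⟨N, ⟨n, hNn, -, hPn⟩, hn⟩ := (hP.and hwindow).exists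
  obtain ⟨⟨hbranch, t, ht⟩, hkn⟩ := hn n hNn
  exact ht (forall_word_mem_of_forall_not_branches hxX hkn
    (fun ε v hv hvB => hμ ((hbranch hPn ε).2.2 v hv hvB)) t)

end GenericFamilies

/-- The nonatomic measures on `A^ℤ` that have a generic point in `X`. -/
def nonatomicGenericMeasures {A : Type*} [TopologicalSpace A] [MeasurableSpace A]
    (X : Set (ℤ → A)) : Set (Measure (ℤ → A)) :=
  {ν | (∀ z, ν {z} = 0) ∧ ∃ y ∈ X, IsGenericPt ν y}

theorem at_most_k_sub_two_generic_measures_general {A : Type*} [Finite A] [TopologicalSpace A]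
    [DiscreteTopology A] [MeasurableSpace A] [BorelSpace A] {X : Set (ℤ → A)} {k : ℕ}
    (hcomp : limsup (fun n : ℕ => (complexity X n : ℝ≥0∞) / n) atTop < k)
    {μ : Measure (ℤ → A)} {x : ℤ → A} (hxX : x ∈ X) (hx : IsGenericPt μ x)
    (hnue : ¬UniquelyErgodicOn (orbitClosure x)) :
    (nonatomicGenericMeasures X).encard + 2 ≤ k := by
  obtain ⟨T, hT, hcard⟩ := Set.exists_subset_encard_eq
    (min_le_left (nonatomicGenericMeasures X).encard k)
  have hfin : T.Finite := Set.finite_of_encard_le_coe (hcard.trans_le (min_le_right _ _))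
  have := hfin.to_subtype
  choose hatom y hyX hy using fun ν : T => hT ν.2
  have (ν : T) : NullSingletonClass ν.1 := ⟨hatom ν⟩
  have hle : T.encard + 2 ≤ k := by
    rw [← hfin.cast_ncard_eq, ← Nat.card_coe_set_eq]
    exact_mod_cast card_add_two_le_of_isGenericPt Subtype.val_injective hyX hy hcomp hxX hx hnue
  rw [hcard] at hle
  rcases min_choice (nonatomicGenericMeasures X).encard k with hmin | hmin
  · rwa [hmin] at hle
  · rw [hmin] at hle
    norm_cast at hle
    omega

/-- If `limsup P_X(n)/n < k` and `X` has a generic measure with a generic point whose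
orbit closure is not uniquely ergodic, then `X` has at most `k-2` distinct nonatomic
generic measures (i.e. there is no family of `k-1` distinct ones). -/
theorem at_most_k_sub_two_generic_measures
    {A : Type*} [Fintype A] [TopologicalSpace A] [DiscreteTopology A]
    [MeasurableSpace A] [BorelSpace A]
    (X : Set (ℤ → A)) (hX : IsSubshift X) (k : ℕ)
    (hcomp : limsup (fun n : ℕ => (complexity X n : ℝ≥0∞) / (n : ℝ≥0∞)) atTop < (k : ℝ≥0∞))
    (μ : Measure (ℤ → A)) (hμ : IsProbabilityMeasure μ) (hμX : μ X = 1)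
    (xμ : ℤ → A) (hxμ : xμ ∈ X) (hgenpt : IsGenericPt μ xμ)
    (hnue : ¬ UniquelyErgodicOn (orbitClosure xμ)) :
    ¬ ∃ ν : Fin (k - 1) → Measure (ℤ → A), Function.Injective ν ∧
        ∀ i, (∀ y, ν i {y} = 0) ∧ GenericMeasureOn X (ν i) := by
  rintro ⟨ν, hν, hgeneric⟩
  have hsub : Set.range ν ⊆ nonatomicGenericMeasures X :=
    Set.range_subset_iff.2 fun i => ⟨(hgeneric i).1, (hgeneric i).2.2.2⟩
  have hle := (add_le_add_left (Set.encard_le_encard hsub) 2).trans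
    (at_most_k_sub_two_generic_measures_general hcomp hxμ hgenpt hnue)
  rw [← Set.image_univ, hν.encard_image, Set.encard_univ, ENat.card_eq_coe_fintype_card,
    Fintype.card_fin] at hle
  norm_cast at hle
  omega
end

section
/- For k > 2, a minimal k-interval exchange transformation has at most k−2 distinct generic measures. -/
open MeasureTheory Filter

/-- `T` is a `k`-interval exchange transformation of `[0, lam)` with separation points
`sep 0 = 0 < sep 1 < … < sep k = lam`: it is a bijection of `[0, lam)` which is a
translation on each subinterval `[sep i, sep (i+1))`. -/
structure IsIET (k : ℕ) (lam : ℝ) (sep : Fin (k + 1) → ℝ) (T : ℝ → ℝ) : Prop where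
  sep_zero : sep 0 = 0
  sep_last : sep (Fin.last k) = lam
  sep_mono : StrictMono sep
  bijOn : Set.BijOn T (Set.Ico 0 lam) (Set.Ico 0 lam)
  translation : ∀ i : Fin k, ∃ c : ℝ,
    ∀ x ∈ Set.Ico (sep i.castSucc) (sep i.succ), T x = x + c

/-- Minimality of an IET: every forward orbit is dense in `[0, lam)`. -/
def IETMinimal (lam : ℝ) (T : ℝ → ℝ) : Prop :=
  ∀ x ∈ Set.Ico (0 : ℝ) lam,
    Set.Ico (0 : ℝ) lam ⊆ closure {y | ∃ n : ℕ, T^[n] x = y}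

/-- The word complexity of the natural symbolic coding of the IET: the number of words
`w` of length `n` over `{0, …, k-1}` that occur as the coding of the first `n` iterates
of some point. -/
noncomputable def ietComplexity (k : ℕ) (lam : ℝ) (sep : Fin (k + 1) → ℝ)
    (T : ℝ → ℝ) (n : ℕ) : ℕ :=
  Nat.card {w : Fin n → Fin k // ∃ x ∈ Set.Ico (0 : ℝ) lam,
    ∀ t : Fin n, T^[(t : ℕ)] x ∈ Set.Ico (sep (w t).castSucc) (sep (w t).succ)}

/-- A generic measure for the IET `T` of `[0, lam)`: a Borel probability measure carried
by `[0, lam)` possessing a generic point. -/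
def IETGenericMeasure (lam : ℝ) (T : ℝ → ℝ) (μ : Measure ℝ) : Prop :=
  IsProbabilityMeasure μ ∧ μ (Set.Ico 0 lam) = 1 ∧
  ∃ x ∈ Set.Ico (0 : ℝ) lam, ∀ f : ℝ → ℝ, Continuous f →
    Tendsto (fun N : ℕ => (∑ n ∈ Finset.range N, f (T^[n] x)) / (N : ℝ))
      atTop (nhds (∫ y, f y ∂μ))

/-!
The backward orbits of the `k - 1` interior cut points are the endpoints of the cylinders: a
cylinder of length `n` is split at length `n + 1` only if it is special, that is, contains a point
`T⁻ⁿ c` with `c` a cut point. By minimality every orbit meets a special cylinder within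
`n (k - 1) + 1` steps. Hence the first `n` steps from `T⁻ⁿ c`, for a suitable cut `c`, see nearly
the same Birkhoff averages as a generic point does, and `k - 1` distinct limits would have to be
realised bijectively, each along the backward orbit of its own cut, and moreover on a whole window
of the past whose length is linear in `n`. On that window the backward orbit of one cut can then
never enter the special cylinder of another. This rigidity makes the first return of `T⁻ⁿ c` to its
own special cylinder, backwards in time, occur after a number of steps independent of `n`, so that
in the limit `c` is periodic, against minimality.
-/

open scoped Topology BoundedContinuousFunction

section Asymptotics

variable {E : Type*} [SeminormedAddCommGroup E]

theorem eventually_forall_le_mul_norm_le_of_isLittleO {u : ℕ → E}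
    (hu : u =o[atTop] fun n : ℕ => (n : ℝ)) (C : ℕ) {ε : ℝ} (hε : 0 < ε) :
    ∀ᶠ n : ℕ in atTop, ∀ m ≤ C * n, ‖u m‖ ≤ ε * n := by
  have hη : 0 < ε / (C + 1) := by positivity
  obtain ⟨M, hM⟩ := eventually_atTop.mp (Asymptotics.isLittleO_iff.mp hu hη)
  have hlarge : ∀ n m : ℕ, m ≤ C * n → M ≤ m → ‖u m‖ ≤ ε * n := fun n m hmn hm => by
    have hmn' : (m : ℝ) ≤ C * n := mod_cast hmn
    calc ‖u m‖ ≤ ε / (C + 1) * m := by simpa using hM m hm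
      _ ≤ ε / (C + 1) * ((C + 1) * n) := by gcongr; linarith [n.cast_nonneg (α := ℝ)]
      _ = ε * n := by field_simp
  have hsmall : ∀ᶠ n : ℕ in atTop, ∀ m ∈ Finset.range M, ‖u m‖ ≤ ε * n :=
    (eventually_all_finset _).mpr fun m _ =>
      (tendsto_natCast_atTop_atTop.const_mul_atTop hε).eventually_ge_atTop ‖u m‖
  filter_upwards [hsmall] with n hn m hmn
  exact (lt_or_ge m M).elim (fun hm => hn m (Finset.mem_range.mpr hm)) (hlarge n m hmn)

theorem isLittleO_sub_nsmul_of_tendsto [NormedSpace ℝ E] {s : ℕ → E} {a : E}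
    (h : Tendsto (fun n : ℕ => (n : ℝ)⁻¹ • s n) atTop (𝓝 a)) :
    (fun n => s n - n • a) =o[atTop] fun n : ℕ => (n : ℝ) := by
  refine Asymptotics.isLittleO_iff.mpr fun ε hε => ?_
  filter_upwards [h.eventually (Metric.ball_mem_nhds a hε), eventually_gt_atTop 0] with n hn hpos
  have hn0 : (n : ℝ) ≠ 0 := by positivity
  have hs : s n - n • a = (n : ℝ) • ((n : ℝ)⁻¹ • s n - a) := by
    rw [smul_sub, smul_inv_smul₀ hn0, Nat.cast_smul_eq_nsmul]
  rw [hs, norm_smul, mul_comm]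
  gcongr
  exact (mem_ball_iff_norm.mp hn).le

theorem eventually_forall_le_mul_dist_window_lt [NormedSpace ℝ E] {s : ℕ → E} {a : E}
    (h : Tendsto (fun n : ℕ => (n : ℝ)⁻¹ • s n) atTop (𝓝 a)) (C : ℕ) {ε : ℝ} (hε : 0 < ε) :
    ∀ᶠ n : ℕ in atTop, ∀ r ≤ C * n, dist ((n : ℝ)⁻¹ • (s (r + n) - s r)) a < ε := by
  filter_upwards [eventually_forall_le_mul_norm_le_of_isLittleO
    (isLittleO_sub_nsmul_of_tendsto h) (C + 1) (by positivity : 0 < ε / 3),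
    eventually_gt_atTop 0] with n hn hpos r hr
  have hn0 : (0 : ℝ) < n := mod_cast hpos
  have hsplit : (n : ℝ)⁻¹ • (s (r + n) - s r) - a =
      (n : ℝ)⁻¹ • ((s (r + n) - (r + n) • a) - (s r - r • a)) := by
    rw [add_nsmul, ← Nat.cast_smul_eq_nsmul ℝ n a]
    match_scalars <;> field_simp
    ring
  rw [dist_eq_norm, hsplit, norm_smul, norm_inv, Real.norm_natCast, inv_mul_lt_iff₀ hn0]
  calc _ ≤ ‖s (r + n) - (r + n) • a‖ + ‖s r - r • a‖ := norm_sub_le _ _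
    _ ≤ ε / 3 * n + ε / 3 * n := add_le_add (hn _ (by lia)) (hn _ (by lia))
    _ < n * ε := by nlinarith

end Asymptotics

section Metric

theorem exists_pos_forall_dist_lt_imp_eq {ι X : Type*} [Finite ι] [MetricSpace X] {a : ι → X}
    (ha : Function.Injective a) : ∃ g > 0, ∀ i j, dist (a i) (a j) < g → i = j := by
  have h : ∀ᶠ g in 𝓝[>] (0 : ℝ), ∀ i j, i ≠ j → g < dist (a i) (a j) := by
    simp only [eventually_all]
    exact fun i j hij => (gt_mem_nhds (dist_pos.mpr (ha.ne hij))).filter_mono nhdsWithin_le_nhds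
  obtain ⟨g, hg, hpos⟩ := (h.and self_mem_nhdsWithin).exists
  exact ⟨g, hpos, fun i j hij => by_contra fun hne => (hg i j hne).not_gt hij⟩

theorem exists_perm_forall_dist_lt {ι X : Type*} [Finite ι] [PseudoMetricSpace X] {p a : ι → X}
    {r : ℝ} (ha : ∀ i j, dist (a i) (a j) < r + r → i = j) (h : ∀ i, ∃ s, dist (p s) (a i) < r) :
    ∃ τ : Equiv.Perm ι, ∀ i, dist (p (τ i)) (a i) < r := by
  choose τ hτ using h
  have hinj : Function.Injective τ := fun i j hij =>
    ha i j ((dist_triangle_left _ _ (p (τ i))).trans_lt (add_lt_add (hτ i) (hij ▸ hτ j)))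
  exact ⟨Equiv.ofBijective τ hinj.bijective_of_finite, hτ⟩

-- By pigeonhole the points `φ n s` approach the limits bijectively; slow variation then freezes
-- the bijection.
theorem exists_perm_tendsto_of_forall_eventually_exists_dist_lt {ι X : Type*} [Finite ι]
    [MetricSpace X] {φ : ℕ → ι → X} {a : ι → X} (ha : Function.Injective a)
    (hφ : ∀ s, Tendsto (fun n => dist (φ (n + 1) s) (φ n s)) atTop (𝓝 0))
    (h : ∀ i, ∀ ε > 0, ∀ᶠ n in atTop, ∃ s, dist (φ n s) (a i) < ε) :
    ∃ τ : Equiv.Perm ι, ∀ i, Tendsto (fun n => φ n (τ i)) atTop (𝓝 (a i)) := by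
  obtain ⟨g, hg, hgap⟩ := exists_pos_forall_dist_lt_imp_eq ha
  have huniq {x i j} (hi : dist x (a i) < g / 4) (hj : dist x (a j) < g / 2) : i = j :=
    hgap i j ((dist_triangle_left _ _ x).trans_lt (by linarith))
  obtain ⟨N, hN⟩ := eventually_atTop.mp <|
    (eventually_all.mpr fun i => h i (g / 4) (by positivity)).and
      (eventually_all.mpr fun s => (hφ s).eventually (gt_mem_nhds (by positivity : 0 < g / 4)))
  have hperm (n : ℕ) (hn : N ≤ n) : ∃ τ : Equiv.Perm ι, ∀ i, dist (φ n (τ i)) (a i) < g / 4 :=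
    exists_perm_forall_dist_lt (fun i j hij => hgap i j (by linarith)) (hN n hn).1
  obtain ⟨τ, hτ⟩ := hperm N le_rfl
  have hstay (n : ℕ) (hn : N ≤ n) : ∀ i, dist (φ n (τ i)) (a i) < g / 4 := by
    induction n, hn using Nat.le_induction with
    | base => exact hτ
    | succ n hn ih =>
      obtain ⟨σ, hσ⟩ := hperm (n + 1) (by lia)
      intro i
      obtain ⟨j, hj⟩ := σ.surjective (τ i)
      have hdrift : dist (φ (n + 1) (τ i)) (a i) < g / 2 :=
        (dist_triangle _ (φ n (τ i)) _).trans_lt (by linarith [(hN n hn).2 (τ i), ih i])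
      obtain rfl : j = i := huniq (hσ j) (hj ▸ hdrift)
      exact hj ▸ hσ j
  refine ⟨τ, fun i => Metric.tendsto_nhds.mpr fun ε hε => ?_⟩
  filter_upwards [h i (min ε (g / 4)) (by positivity), eventually_ge_atTop N] with n ⟨s, hs⟩ hn
  obtain ⟨hsε, hsg⟩ := lt_min_iff.mp hs
  obtain ⟨j, rfl⟩ := τ.surjective s
  obtain rfl : j = i := huniq (hstay n hn j) (hsg.trans (by linarith))
  exact hsε

end Metric

section UniformSpace

theorem uniformContinuous_comp_subtypeVal_Ico {X Y : Type*} [Preorder X] [UniformSpace X]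
    [CompactIccSpace X] [UniformSpace Y] {f : X → Y} (hf : Continuous f) (a b : X) :
    UniformContinuous (f ∘ (Subtype.val : Set.Ico a b → X)) :=
  uniformContinuousOn_iff_restrict.mp <| (isCompact_Icc.uniformContinuousOn_of_continuous
    hf.continuousOn).mono Set.Ico_subset_Icc_self

end UniformSpace

section Measure

theorem exists_injective_integral_boundedContinuousFunction {ι X : Type*} [Finite ι]
    [TopologicalSpace X] [HasOuterApproxClosed X] [MeasurableSpace X] [BorelSpace X]
    {μ : ι → Measure X} [∀ i, IsFiniteMeasure (μ i)] (hμ : Function.Injective μ) :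
    ∃ f : X →ᵇ ℝ, Function.Injective fun i => ∫ x, f x ∂μ i := by
  let L (p : {p : ι × ι // p.1 ≠ p.2}) : (X →ᵇ ℝ) →ₗ[ℝ] ℝ :=
    { toFun := fun f => ∫ x, f x ∂μ p.1.1 - ∫ x, f x ∂μ p.1.2
      map_add' := fun f g => by
        simp only [BoundedContinuousFunction.add_apply]
        rw [integral_add (f.integrable _) (g.integrable _),
          integral_add (f.integrable _) (g.integrable _)]
        ring
      map_smul' := fun c f => by
        simp only [BoundedContinuousFunction.coe_smul, smul_eq_mul, integral_const_mul,
          RingHom.id_apply]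
        ring }
  have hL (p) : ∃ f, L p f ≠ 0 := by
    by_contra! h
    exact p.2 (hμ (ext_of_forall_integral_eq_of_IsFiniteMeasure fun f => sub_eq_zero.mp (h f)))
  obtain ⟨f, hf⟩ := Module.Dual.exists_forall_ne_zero_of_forall_exists L hL
  exact ⟨f, fun i j hij => by_contra fun hne => hf ⟨(i, j), hne⟩ (sub_eq_zero.mpr hij)⟩

end Measure

section Dynamics

theorem iterate_notMem_of_forall_return {X : Type*} {T : X → X} {U V : Set X}
    (hUV : Disjoint U V)
    (h : ∀ z ∈ U, ∃ q > 0, T^[q] z ∈ U ∧ ∀ j, 0 < j → j < q → T^[j] z ∉ V) (m : ℕ) :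
    ∀ z ∈ U, T^[m] z ∉ V := by
  induction m using Nat.strong_induction_on with
  | _ m ih =>
    intro z hz
    obtain ⟨q, hq, hqU, hqV⟩ := h z hz
    obtain rfl | hm := m.eq_zero_or_pos
    · exact Set.disjoint_left.mp hUV hz
    obtain hlt | hle := lt_or_ge m q
    · exact hqV m hm hlt
    · obtain ⟨d, rfl⟩ := Nat.exists_eq_add_of_le' hle
      rw [Function.iterate_add_apply]
      exact ih d (by lia) _ hqU

theorem eventually_forall_le_mul_dist_birkhoffAverage_iterate_lt {X E : Type*}
    [SeminormedAddCommGroup E] [NormedSpace ℝ E] {T : X → X} {f : X → E} {x : X} {a : E}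
    (h : Tendsto (birkhoffAverage ℝ T f · x) atTop (𝓝 a)) (C : ℕ) {ε : ℝ} (hε : 0 < ε) :
    ∀ᶠ n : ℕ in atTop, ∀ r ≤ C * n, dist (birkhoffAverage ℝ T f n (T^[r] x)) a < ε := by
  filter_upwards [eventually_forall_le_mul_dist_window_lt h C hε] with n hn r hr
  have hsum : birkhoffSum T f n (T^[r] x) = birkhoffSum T f (r + n) x - birkhoffSum T f r x := by
    rw [birkhoffSum_add, add_sub_cancel_left]
  simpa only [birkhoffAverage, hsum] using hn r hr

theorem norm_birkhoffAverage_le {X E : Type*} [SeminormedAddCommGroup E] [NormedSpace ℝ E]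
    {T : X → X} {f : X → E} {B : ℝ} (hf : ∀ x, ‖f x‖ ≤ B) (n : ℕ) (x : X) :
    ‖birkhoffAverage ℝ T f n x‖ ≤ B := by
  have hB : 0 ≤ B := (norm_nonneg _).trans (hf x)
  calc ‖birkhoffAverage ℝ T f n x‖ = (n : ℝ)⁻¹ * ‖birkhoffSum T f n x‖ := by
        rw [birkhoffAverage, norm_smul, norm_inv, Real.norm_natCast]
    _ ≤ (n : ℝ)⁻¹ * (n * B) := by
        gcongr
        simpa [birkhoffSum] using norm_sum_le_of_le (Finset.range n) fun i _ => hf (T^[i] x)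
    _ ≤ B := by
        rw [← mul_assoc]
        exact mul_le_of_le_one_left hB (inv_mul_le_one)

theorem tendsto_dist_birkhoffAverage_succ {X E : Type*} [SeminormedAddCommGroup E]
    [NormedSpace ℝ E] {f : X → E} (hf : Bornology.IsBounded (Set.range f)) (T : X → X) (x : X) :
    Tendsto (fun n => dist (birkhoffAverage ℝ T f (n + 1) x) (birkhoffAverage ℝ T f n x))
      atTop (𝓝 0) := by
  obtain ⟨B, hB⟩ := hf.exists_norm_le
  rw [Set.forall_mem_range] at hB
  refine squeeze_zero (fun _ => dist_nonneg) (fun n => ?_)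
    ((tendsto_const_div_atTop_nhds_zero_nat (B + B)).comp (tendsto_add_atTop_nat 1))
  have hstep : birkhoffAverage ℝ T f (n + 1) x - birkhoffAverage ℝ T f n x =
      ((n : ℝ) + 1)⁻¹ • (f (T^[n] x) - birkhoffAverage ℝ T f n x) := by
    obtain rfl | hn := n.eq_zero_or_pos
    · simp [birkhoffAverage]
    · rw [birkhoffAverage, birkhoffAverage, birkhoffSum_succ, Nat.cast_succ]
      match_scalars <;> field_simp
      ring
  rw [Function.comp_apply, dist_eq_norm, hstep, norm_smul, norm_inv, ← Nat.cast_succ,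
    Real.norm_natCast, inv_mul_eq_div]
  gcongr
  exact norm_sub_le_of_le (hB _) (norm_birkhoffAverage_le hB n x)

theorem birkhoffSum_perm_symm_iterate {X M : Type*} [AddCommMonoid M] (e : Equiv.Perm X)
    (f : X → M) (n : ℕ) (x : X) :
    birkhoffSum e f n (e.symm^[n] x) = birkhoffSum e.symm f n (e.symm x) := by
  induction n with
  | zero => simp
  | succ n ih =>
    rw [birkhoffSum_succ', birkhoffSum_succ, ← Function.iterate_succ_apply,
      Function.iterate_succ_apply', Equiv.apply_symm_apply, ih, add_comm]

end Dynamics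

/-- An interval exchange of `[0, lam)` in coordinate-free form: a bijection `T` together with
interior cut points, such that `T` moves two points by the same amount whenever no cut point
separates them. The cut points are indexed by an arbitrary type; with `k` intervals there are
`k - 1` of them. -/
structure IntervalExchange (lam : ℝ) (ι : Type*) where
  /-- The transformation. -/
  T : Equiv.Perm (Set.Ico (0 : ℝ) lam)
  /-- The interior endpoints of the exchanged intervals. -/
  cut : ι → Set.Ico (0 : ℝ) lam
  cut_pos : ∀ s, (0 : ℝ) < cut s
  translation : ∀ x y, (∀ s, cut s ≤ x ↔ cut s ≤ y) → (T y : ℝ) - T x = y - x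

namespace IntervalExchange

variable {lam : ℝ} {ι : Type*} (A : IntervalExchange lam ι)

/-- Minimality: every forward orbit is dense. -/
def Minimal : Prop := ∀ x, Dense (Set.range fun n : ℕ => A.T^[n] x)

/-- The `n`-th point `T⁻ⁿ (cut s)` on the backward orbit of a cut point. -/
def preCut (s : ι) (n : ℕ) : Set.Ico (0 : ℝ) lam := A.T.symm^[n] (A.cut s)

/-- The points `x` and `y` lie in the same cylinder of length `n`: along their first `n` iterates
they visit the same exchanged intervals. -/
def SameItinerary (n : ℕ) (x y : Set.Ico (0 : ℝ) lam) : Prop :=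
  ∀ t < n, ∀ s, A.cut s ≤ A.T^[t] x ↔ A.cut s ≤ A.T^[t] y

variable {A} {n m : ℕ} {s t : ι} {x y z w : Set.Ico (0 : ℝ) lam}

section BackwardOrbit

theorem iterate_preCut_add (n r : ℕ) : A.T^[r] (A.preCut s (n + r)) = A.preCut s n := by
  rw [preCut, add_comm, Function.iterate_add_apply]
  exact A.T.rightInverse_symm.iterate r _

theorem eq_preCut_of_iterate_eq (h : A.T^[n] x = A.cut s) : x = A.preCut s n := by
  rw [preCut, ← h]
  exact (A.T.leftInverse_symm.iterate n x).symm

end BackwardOrbit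

namespace SameItinerary

theorem refl (n : ℕ) (x : Set.Ico (0 : ℝ) lam) : A.SameItinerary n x x := fun _ _ _ => Iff.rfl

theorem symm (h : A.SameItinerary n x y) : A.SameItinerary n y x := fun t ht s => (h t ht s).symm

theorem trans (h : A.SameItinerary n x y) (h' : A.SameItinerary n y z) : A.SameItinerary n x z :=
  fun t ht s => (h t ht s).trans (h' t ht s)

theorem mono (h : A.SameItinerary n x y) (hmn : m ≤ n) : A.SameItinerary m x y :=
  fun t ht => h t (ht.trans_le hmn)

theorem iterate {j : ℕ} (h : A.SameItinerary (n + j) x y) :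
    A.SameItinerary n (A.T^[j] x) (A.T^[j] y) := fun t ht s => by
  simpa only [Function.iterate_add_apply] using h (t + j) (by lia) s

end SameItinerary

theorem sameItinerary_succ_iff : A.SameItinerary (n + 1) x y ↔
    A.SameItinerary n x y ∧ ∀ s, A.cut s ≤ A.T^[n] x ↔ A.cut s ≤ A.T^[n] y :=
  Nat.forall_lt_succ_right

theorem SameItinerary.iterate_sub_iterate (h : A.SameItinerary n x y) :
    (A.T^[n] y : ℝ) - A.T^[n] x = y - x := by
  induction n with
  | zero => rfl
  | succ n ih =>
    obtain ⟨hn, hcut⟩ := sameItinerary_succ_iff.mp h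
    rw [Function.iterate_succ_apply', Function.iterate_succ_apply', A.translation _ _ hcut, ih hn]

theorem SameItinerary.iterate_le_iterate (h : A.SameItinerary n x y) (hxy : x ≤ y) :
    A.T^[n] x ≤ A.T^[n] y := by
  rw [← Subtype.coe_le_coe] at hxy ⊢
  linarith [h.iterate_sub_iterate]

theorem SameItinerary.of_le_of_le (h : A.SameItinerary n x y) (hxz : x ≤ z) (hzy : z ≤ y) :
    A.SameItinerary n x z := by
  induction n with
  | zero => exact fun t ht => absurd ht t.not_lt_zero
  | succ n ih =>
    obtain ⟨hn, hcut⟩ := sameItinerary_succ_iff.mp h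
    have hz := ih hn
    have hxz' := hz.iterate_le_iterate hxz
    have hzy' := (hz.symm.trans hn).iterate_le_iterate hzy
    exact sameItinerary_succ_iff.mpr
      ⟨hz, fun s => ⟨fun hs => hs.trans hxz', fun hs => (hcut s).mpr (hs.trans hzy')⟩⟩

theorem SameItinerary.exists_preCut_mem_Ioc (h : A.SameItinerary n x y)
    (hn : ¬ A.SameItinerary (n + 1) x y) (hxy : x ≤ y) :
    ∃ s, A.preCut s n ∈ Set.Ioc x y ∧ A.SameItinerary n x (A.preCut s n) := by
  have hle := h.iterate_le_iterate hxy
  obtain ⟨s, hxs, hsy⟩ : ∃ s, A.T^[n] x < A.cut s ∧ A.cut s ≤ A.T^[n] y := by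
    by_contra! hs
    exact hn (sameItinerary_succ_iff.mpr ⟨h, fun s =>
      ⟨fun hx => hx.trans hle, fun hy => not_lt.mp fun hx => (hs s hx).not_ge hy⟩⟩)
  rw [← Subtype.coe_lt_coe] at hxs
  rw [← Subtype.coe_le_coe] at hsy
  have hd := h.iterate_sub_iterate
  have hw : (x + (A.cut s - A.T^[n] x) : ℝ) ∈ Set.Ico 0 lam :=
    ⟨by linarith [x.2.1], by linarith [y.2.2]⟩
  let w : Set.Ico (0 : ℝ) lam := ⟨_, hw⟩
  have hxw : x < w := Subtype.coe_lt_coe.mp (by simp only [w]; linarith)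
  have hwy : w ≤ y := Subtype.coe_le_coe.mp (by simp only [w]; linarith)
  have hwn := h.of_le_of_le hxw.le hwy
  have hws : w = A.preCut s n := eq_preCut_of_iterate_eq <| Subtype.ext <| by
    linarith [hwn.iterate_sub_iterate, show (w : ℝ) - x = A.cut s - A.T^[n] x by simp [w]]
  exact ⟨s, hws ▸ ⟨hxw, hwy⟩, hws ▸ hwn⟩

theorem exists_preCut_mem_Ioc_of_not_sameItinerary (h : ¬ A.SameItinerary n x y) (hxy : x ≤ y) :
    ∃ j < n, ∃ s, A.preCut s j ∈ Set.Ioc x y := by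
  induction n with
  | zero => exact absurd (fun t ht => absurd ht t.not_lt_zero) h
  | succ n ih =>
    by_cases hn : A.SameItinerary n x y
    · exact ⟨n, n.lt_succ_self, (hn.exists_preCut_mem_Ioc h hxy).imp fun s => And.left⟩
    · obtain ⟨j, hj, hs⟩ := ih hn
      exact ⟨j, by lia, hs⟩

section SpecialCylinders

/-- The cylinder of length `n` around `x` is special: it contains some `preCut s n`, and so is
the only kind of cylinder that a cut can split when the length grows to `n + 1`. -/
def IsSpecial (A : IntervalExchange lam ι) (n : ℕ) (x : Set.Ico (0 : ℝ) lam) : Prop :=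
  ∃ s, A.SameItinerary n x (A.preCut s n)

theorem isSpecial_preCut (s : ι) (n : ℕ) : A.IsSpecial n (A.preCut s n) := ⟨s, .refl _ _⟩

theorem SameItinerary.isSpecial (h : A.SameItinerary n x y) (hx : A.IsSpecial n x) :
    A.IsSpecial n y := hx.imp fun _ hs => h.symm.trans hs

theorem SameItinerary.succ_of_not_isSpecial (h : A.SameItinerary n x y)
    (hx : ¬ A.IsSpecial n x) : A.SameItinerary (n + 1) x y := by
  by_contra hn
  obtain hxy | hyx := le_total x y
  · obtain ⟨s, -, hs⟩ := h.exists_preCut_mem_Ioc hn hxy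
    exact hx ⟨s, hs⟩
  · obtain ⟨s, -, hs⟩ := h.symm.exists_preCut_mem_Ioc (fun h' => hn h'.symm) hyx
    exact hx ⟨s, h.trans hs⟩

theorem SameItinerary.of_forall_not_isSpecial {i : ℕ} (h : A.SameItinerary (n + i) x y)
    (him : i ≤ m) (hx : ∀ j, i ≤ j → j < m → ¬ A.IsSpecial n (A.T^[j] x)) :
    A.SameItinerary (n + m) x y := by
  induction m, him using Nat.le_induction with
  | base => exact h
  | succ m him ih =>
    have hm := ih fun j hij hj => hx j hij (by lia)
    have hsucc := hm.iterate.succ_of_not_isSpecial (hx m him m.lt_succ_self)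
    rw [← add_assoc, sameItinerary_succ_iff]
    exact ⟨hm, fun s => by
      simpa only [Function.iterate_add_apply] using hsucc n n.lt_succ_self s⟩

end SpecialCylinders

section Minimality

theorem Minimal.iterate_ne_self (hmin : A.Minimal) {q : ℕ} (hq : 0 < q) : A.T^[q] x ≠ x := by
  intro hx
  have hfin : (Set.range fun n : ℕ => A.T^[n] x).Finite := by
    refine (Set.finite_range fun r : Fin q => A.T^[r] x).subset ?_
    rintro _ ⟨n, rfl⟩
    exact ⟨⟨n % q, n.mod_lt hq⟩, Function.IsPeriodicPt.iterate_mod_apply hx n⟩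
  have huniv : (Set.univ : Set (Set.Ico (0 : ℝ) lam)).Finite := by
    rwa [← (hmin x).closure_eq, hfin.isClosed.closure_eq]
  exact Set.Ico_infinite (x.2.1.trans_lt x.2.2)
    (Set.finite_coe_iff.mp (Set.finite_univ_iff.mp huniv))

theorem eventually_sameItinerary [Finite ι] (n : ℕ) (x : Set.Ico (0 : ℝ) lam) :
    ∀ᶠ y in 𝓝[≥] x, A.SameItinerary n x y := by
  have hcut : ∀ᶠ y in 𝓝[≥] x, ∀ j ∈ Finset.range n, ∀ s, A.preCut s j ∉ Set.Ioc x y := by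
    simp only [eventually_all_finset, eventually_all]
    intro j _ s
    obtain hs | hs := le_or_gt (A.preCut s j) x
    · exact .of_forall fun y hy => hy.1.not_ge hs
    · filter_upwards [mem_nhdsWithin_of_mem_nhds (gt_mem_nhds hs)] with y hy hmem
      exact hmem.2.not_gt hy
  filter_upwards [hcut, self_mem_nhdsWithin] with y hy hxy
  by_contra hn
  obtain ⟨j, hj, s, hs⟩ := exists_preCut_mem_Ioc_of_not_sameItinerary hn hxy
  exact hy j (Finset.mem_range.mpr hj) s hs

theorem Minimal.exists_sameItinerary_iterate [Finite ι] (hmin : A.Minimal) (n : ℕ)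
    (x y : Set.Ico (0 : ℝ) lam) : ∃ m, A.SameItinerary n y (A.T^[m] x) := by
  obtain ⟨u, hyu, hu⟩ := mem_nhdsGE_iff_exists_Ico_subset.mp (eventually_sameItinerary (A := A) n y)
  obtain ⟨_, ⟨m, rfl⟩, hmem⟩ := (hmin x).exists_mem_open isOpen_Ioo (Set.nonempty_Ioo.mpr hyu)
  exact ⟨m, hu (Set.Ioo_subset_Ico_self hmem)⟩

theorem Minimal.exists_not_sameItinerary [Nonempty ι] (hmin : A.Minimal) (hxy : x < y) :
    ∃ n, ¬ A.SameItinerary n x y := by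
  obtain ⟨s⟩ := ‹Nonempty ι›
  rw [← Subtype.coe_lt_coe] at hxy
  have hη : max 0 (A.cut s - (y - x) : ℝ) < A.cut s := max_lt (A.cut_pos s) (by linarith)
  let v : Set.Ico (0 : ℝ) lam := ⟨_, le_max_left _ _, hη.trans (A.cut s).2.2⟩
  have hv : v < A.cut s := hη
  obtain ⟨_, ⟨n, rfl⟩, hvn, hns⟩ :=
    (hmin x).exists_mem_open isOpen_Ioo (Set.nonempty_Ioo.mpr hv)
  refine ⟨n + 1, fun h => hns.not_ge ?_⟩
  obtain ⟨hn, hcut⟩ := sameItinerary_succ_iff.mp h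
  refine (hcut s).mpr (Subtype.coe_le_coe.mp ?_)
  have hvn' : (A.cut s - (y - x) : ℝ) < A.T^[n] x :=
    (le_max_right _ _).trans_lt (Subtype.coe_lt_coe.mpr hvn)
  linarith [hn.iterate_sub_iterate]

theorem Minimal.eq_of_forall_sameItinerary [Nonempty ι] (hmin : A.Minimal)
    (h : ∀ n, A.SameItinerary n x y) : x = y := by
  by_contra hne
  wlog hxy : x < y generalizing x y
  · exact this (fun n => (h n).symm) (Ne.symm hne) ((Ne.lt_or_gt hne).resolve_left hxy)
  obtain ⟨n, hn⟩ := hmin.exists_not_sameItinerary hxy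
  exact hn (h n)

-- By compactness infinitely many of the intervals `[x, y]` share one of length `δ / 3`.
theorem exists_lt_forall_sameItinerary {δ : ℝ} (hδ : 0 < δ)
    (h : ∀ n, ∃ x y, A.SameItinerary n x y ∧ (x : ℝ) + δ ≤ y) :
    ∃ a b, a < b ∧ ∀ n, A.SameItinerary n a b := by
  choose x y hxy hle using h
  obtain ⟨p, ⟨hp, -⟩, φ, hφ, hlim⟩ : ∃ p ∈ Set.Icc 0 lam, ∃ φ : ℕ → ℕ, StrictMono φ ∧
      Tendsto (fun n => (x (φ n) : ℝ)) atTop (𝓝 p) :=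
    isCompact_Icc.tendsto_subseq fun n => Set.Ico_subset_Icc_self (x n).2
  obtain ⟨N, hN⟩ := eventually_atTop.mp
    (hlim.eventually (Ioo_mem_nhds (by linarith : p - δ / 3 < p) (by linarith : p < p + δ / 3)))
  have hlt (n : ℕ) (hn : N ≤ n) : p + 2 * (δ / 3) < y (φ n) := by
    linarith [(hN n hn).1, hle (φ n)]
  have hlam : p + 2 * (δ / 3) < lam := (hlt N le_rfl).trans (y (φ N)).2.2
  let a : Set.Ico (0 : ℝ) lam := ⟨p + δ / 3, by positivity, by linarith⟩
  let b : Set.Ico (0 : ℝ) lam := ⟨p + 2 * (δ / 3), by positivity, hlam⟩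
  have hab : a < b := Subtype.mk_lt_mk.mpr (by linarith)
  refine ⟨a, b, hab, fun n => ?_⟩
  have hcyl := (hxy (φ (max n N))).mono ((le_max_left _ _).trans hφ.le_apply)
  have hxa : x (φ (max n N)) ≤ a := (hN _ (le_max_right _ _)).2.le
  have hby : b ≤ y (φ (max n N)) := (hlt _ (le_max_right _ _)).le
  exact (hcyl.of_le_of_le hxa (hab.le.trans hby)).symm.trans
    (hcyl.of_le_of_le (hxa.trans hab.le) hby)

theorem Minimal.eventually_dist_lt_of_sameItinerary [Nonempty ι] (hmin : A.Minimal) {δ : ℝ}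
    (hδ : 0 < δ) : ∀ᶠ n in atTop, ∀ x y, A.SameItinerary n x y → dist x y < δ := by
  by_contra hfreq
  obtain ⟨a, b, hab, hsame⟩ := exists_lt_forall_sameItinerary (A := A) hδ fun n => by
    by_contra! h
    refine hfreq (eventually_atTop.mpr ⟨n, fun m hm x y hxy => ?_⟩)
    have hxy' := hxy.mono hm
    rw [Subtype.dist_eq, Real.dist_eq, abs_sub_lt_iff]
    exact ⟨by linarith [h y x hxy'.symm], by linarith [h x y hxy']⟩
  exact hab.ne (hmin.eq_of_forall_sameItinerary hsame)

end Minimality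

section Recurrence

/-- The number of endpoints `preCut s j`, `j < n`, to the left of `x`; it determines the cylinder
of length `n` containing `x`. -/
noncomputable def cylinderIndex [Fintype ι] (A : IntervalExchange lam ι) (n : ℕ)
    (x : Set.Ico (0 : ℝ) lam) : ℕ :=
  (Finset.univ.filter fun p : Fin n × ι => A.preCut p.2 p.1 ≤ x).card

theorem cylinderIndex_le [Fintype ι] (n : ℕ) (x : Set.Ico (0 : ℝ) lam) :
    A.cylinderIndex n x ≤ n * Fintype.card ι := by
  simpa [cylinderIndex] using
    Finset.card_filter_le Finset.univ fun p : Fin n × ι => A.preCut p.2 p.1 ≤ x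

theorem sameItinerary_of_cylinderIndex_eq [Fintype ι]
    (h : A.cylinderIndex n x = A.cylinderIndex n y) : A.SameItinerary n x y := by
  wlog hxy : x ≤ y generalizing x y
  · exact (this h.symm (le_of_not_ge hxy)).symm
  by_contra hn
  obtain ⟨j, hj, s, hxs, hsy⟩ := exists_preCut_mem_Ioc_of_not_sameItinerary hn hxy
  refine (Finset.card_lt_card ?_).ne h
  refine (Finset.ssubset_iff_of_subset fun p hp => ?_).mpr ⟨(⟨j, hj⟩, s), ?_, ?_⟩
  · simp only [Finset.mem_filter_univ] at hp ⊢
    exact hp.trans hxy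
  · simpa only [Finset.mem_filter_univ] using hsy
  · simpa only [Finset.mem_filter_univ, not_le] using hxs

theorem exists_lt_sameItinerary [Fintype ι] (n : ℕ) (u : ℕ → Set.Ico (0 : ℝ) lam) :
    ∃ i j, i < j ∧ j ≤ n * Fintype.card ι + 1 ∧ A.SameItinerary n (u i) (u j) := by
  obtain ⟨i, j, hij, h⟩ := Fintype.exists_ne_map_eq_of_card_lt
    (fun i : Fin (n * Fintype.card ι + 2) =>
      (⟨A.cylinderIndex n (u i), Nat.lt_succ_of_le (cylinderIndex_le n _)⟩ :
        Fin (n * Fintype.card ι + 1))) (by simp)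
  have hsame := sameItinerary_of_cylinderIndex_eq (Fin.mk.inj h)
  obtain hlt | hlt := lt_or_gt_of_ne (Fin.val_ne_of_ne hij)
  · exact ⟨i, j, hlt, by lia, hsame⟩
  · exact ⟨j, i, hlt, by lia, hsame.symm⟩

-- An orbit that revisits a cylinder without meeting a special one repeats its itinerary forever.
theorem Minimal.exists_isSpecial_iterate [Fintype ι] [Nonempty ι] (hmin : A.Minimal) (n : ℕ)
    (x : Set.Ico (0 : ℝ) lam) : ∃ r ≤ n * Fintype.card ι + 1, A.IsSpecial n (A.T^[r] x) := by
  by_contra! hx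
  obtain ⟨i, j, hij, hj, hsame⟩ := exists_lt_sameItinerary (A := A) n fun m => A.T^[m] x
  obtain ⟨q, rfl⟩ := Nat.exists_eq_add_of_lt hij
  set z := A.T^[i] x with hz
  rw [show i + q + 1 = (q + 1) + i by lia, Function.iterate_add_apply, ← hz] at hsame
  have hnot (m : ℕ) : ¬ A.IsSpecial n (A.T^[m] z) := by
    induction m using Nat.strong_induction_on with
    | _ m ih =>
      intro hm
      obtain hlt | hle := lt_or_ge m (q + 1)
      · refine hx (m + i) (by lia) ?_
        rwa [Function.iterate_add_apply]
      · obtain ⟨d, rfl⟩ := Nat.exists_eq_add_of_le' hle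
        rw [Function.iterate_add_apply] at hm
        have hd : A.SameItinerary (n + d) z (A.T^[q + 1] z) :=
          SameItinerary.of_forall_not_isSpecial (i := 0) hsame d.zero_le
            fun k _ hk => ih k (by lia)
        exact ih d (by lia) (hd.iterate.symm.isSpecial hm)
  exact hmin.iterate_ne_self q.succ_pos (hmin.eq_of_forall_sameItinerary fun m =>
    (SameItinerary.of_forall_not_isSpecial (i := 0) hsame m.zero_le
      fun k _ _ => hnot k).mono (Nat.le_add_left m n)).symm

end Recurrence

section Returns

variable {a b l R : ℕ}

/-- The backward orbit of `cut s` is back, `l` steps further into the past, in the special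
cylinder of length `n` around `preCut s n`. -/
def IsReturn (A : IntervalExchange lam ι) (s : ι) (n l : ℕ) : Prop :=
  A.SameItinerary n (A.preCut s (n + l)) (A.preCut s n)

/-- `b` is the first return, in the sense of `IsReturn`, after time `a`. -/
def IsNextReturn (A : IntervalExchange lam ι) (s : ι) (n a b : ℕ) : Prop :=
  IsLeast {b | a < b ∧ A.IsReturn s n b} b

/-- `l` is the first positive time at which the forward orbit of `z` is in a special cylinder of
length `n`. -/
def IsFirstSpecialTime (A : IntervalExchange lam ι) (n : ℕ) (z : Set.Ico (0 : ℝ) lam) (l : ℕ) :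
    Prop :=
  IsLeast {j | 0 < j ∧ A.IsSpecial n (A.T^[j] z)} l

/-- The first `R` steps into the past of each `preCut s n` avoid the special cylinders of length
`n` of the other cuts. -/
def SpecialSeparated (A : IntervalExchange lam ι) (n R : ℕ) : Prop :=
  ∀ s t, ∀ r ≤ R, A.SameItinerary n (A.preCut s (n + r)) (A.preCut t n) → s = t

theorem isReturn_zero (s : ι) (n : ℕ) : A.IsReturn s n 0 := .refl _ _

theorem IsReturn.of_succ (h : A.IsReturn s (n + 1) l) : A.IsReturn s n l := by
  have h1 := SameItinerary.iterate (n := n) (j := 1) h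
  rwa [add_right_comm, iterate_preCut_add, iterate_preCut_add] at h1

theorem Minimal.exists_isNextReturn [Fintype ι] [Nonempty ι] (hmin : A.Minimal)
    (hsep : A.SpecialSeparated n R) (s : ι) (haR : a + (n * Fintype.card ι + 2) ≤ R) :
    ∃ b ≤ a + (n * Fintype.card ι + 2), A.IsNextReturn s n a b := by
  obtain ⟨r, hr, t, ht⟩ := hmin.exists_isSpecial_iterate n
    (A.preCut s (n + (a + (n * Fintype.card ι + 2))))
  obtain ⟨d, hd⟩ := Nat.exists_eq_add_of_le (hr.trans (by lia :
    n * Fintype.card ι + 1 ≤ a + (n * Fintype.card ι + 2)))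
  rw [hd, add_comm r d, ← add_assoc, iterate_preCut_add] at ht
  obtain rfl := hsep s t d (by lia) ht
  have hmem : d ∈ {b | a < b ∧ A.IsReturn s n b} := ⟨by lia, ht⟩
  exact ⟨_, (Nat.sInf_le hmem).trans (by lia), isLeast_csInf ⟨d, hmem⟩⟩

theorem IsNextReturn.isFirstSpecialTime (hb : A.IsNextReturn s n a b) (ha : A.IsReturn s n a)
    (hsep : A.SpecialSeparated n R) (hbR : b ≤ R) :
    A.IsFirstSpecialTime n (A.preCut s (n + b)) (b - a) := by
  have hab := hb.1.1
  constructor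
  · refine ⟨by lia, ?_⟩
    rw [show n + b = n + a + (b - a) by lia, iterate_preCut_add]
    exact ⟨s, ha⟩
  · rintro j ⟨hj, t, ht⟩
    by_contra! hlt
    rw [show n + b = n + (b - j) + j by lia, iterate_preCut_add] at ht
    obtain rfl := hsep s t _ (by lia) ht
    exact absurd (hb.2 ⟨by lia, ht⟩) (by lia)

theorem IsFirstSpecialTime.sameItinerary_add (hx : A.IsFirstSpecialTime n x l)
    (h : A.SameItinerary (n + 1) x y) : A.SameItinerary (n + l) x y :=
  h.of_forall_not_isSpecial hx.1.1 fun _ hj hjl hs => hjl.not_ge (hx.2 ⟨hj, hs⟩)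

theorem IsFirstSpecialTime.congr (hx : A.IsFirstSpecialTime n x l)
    (h : A.SameItinerary (n + 1) x y) : A.IsFirstSpecialTime n y l := by
  have hsame {j : ℕ} (hj : j ≤ l) : A.SameItinerary n (A.T^[j] x) (A.T^[j] y) :=
    ((hx.sameItinerary_add h).mono (by lia)).iterate
  refine ⟨⟨hx.1.1, (hsame le_rfl).isSpecial hx.1.2⟩, fun j ⟨hj, hs⟩ => ?_⟩
  by_contra! hjl
  exact hjl.not_ge (hx.2 ⟨hj, (hsame hjl.le).symm.isSpecial hs⟩)

theorem sameItinerary_succ_of_preCut_le_iff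
    (hsep : ∀ t, A.SameItinerary n (A.preCut s n) (A.preCut t n) → s = t)
    (hx : A.SameItinerary n x (A.preCut s n)) (hy : A.SameItinerary n y (A.preCut s n))
    (h : A.preCut s n ≤ x ↔ A.preCut s n ≤ y) : A.SameItinerary (n + 1) x y := by
  wlog hxy : x ≤ y generalizing x y
  · exact (this hy hx h.symm (le_of_not_ge hxy)).symm
  by_contra hn
  obtain ⟨t, ⟨hxt, hty⟩, ht⟩ := (hx.trans hy.symm).exists_preCut_mem_Ioc hn hxy
  obtain rfl := hsep t (hx.symm.trans ht)
  exact hxt.not_ge (h.mpr hty)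

theorem Minimal.sameItinerary_of_isSpecial_of_forall_return [Finite ι] (hmin : A.Minimal)
    (hret : ∀ z, A.SameItinerary n z x →
      ∃ q, A.IsFirstSpecialTime n z q ∧ A.SameItinerary n (A.T^[q] z) x)
    (hy : A.IsSpecial n y) : A.SameItinerary n y x := by
  by_contra hne
  obtain ⟨m, hm⟩ := hmin.exists_sameItinerary_iterate n x y
  refine iterate_notMem_of_forall_return (T := A.T) (U := {z | A.SameItinerary n z x})
    (V := {z | A.SameItinerary n z y}) ?_ (fun z hz => ?_) m x (.refl _ _) hm.symm
  · exact Set.disjoint_left.mpr fun z hzx hzy => hne (hzy.symm.trans hzx)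
  · obtain ⟨q, hq, hqx⟩ := hret z hz
    exact ⟨q, hq.1.1, hqx, fun j hj hjq hjy => hjq.not_ge (hq.2 ⟨hj, hjy.symm.isSpecial hy⟩)⟩

-- Otherwise `preCut s n` lies between `x` and `y`, and every point of its cylinder behaves like `x`
-- or like `y`: it returns there before it meets another special cylinder, against minimality.
theorem Minimal.sameItinerary_succ_of_return [Finite ι] [Nontrivial ι] (hmin : A.Minimal)
    (hsep : ∀ t, A.SameItinerary n (A.preCut s n) (A.preCut t n) → s = t)
    (hx : A.SameItinerary n x (A.preCut s n)) (hxa : A.IsFirstSpecialTime n x a)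
    (hxs : A.SameItinerary n (A.T^[a] x) (A.preCut s n))
    (hy : A.SameItinerary n y (A.preCut s n)) (hyb : A.IsFirstSpecialTime n y b)
    (hys : A.SameItinerary n (A.T^[b] y) (A.preCut s n)) : A.SameItinerary (n + 1) x y := by
  by_contra hxy
  obtain ⟨t, hts⟩ := exists_ne s
  refine hts (hsep t (hmin.sameItinerary_of_isSpecial_of_forall_return (fun z hz => ?_)
    (isSpecial_preCut t n)).symm).symm
  have hxz_or_hyz : A.SameItinerary (n + 1) x z ∨ A.SameItinerary (n + 1) y z := by
    have hsides := mt (sameItinerary_succ_of_preCut_le_iff hsep hx hy) hxy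
    have hxz := sameItinerary_succ_of_preCut_le_iff hsep hx hz
    have hyz := sameItinerary_succ_of_preCut_le_iff hsep hy hz
    tauto
  obtain hxz | hyz := hxz_or_hyz
  · exact ⟨a, hxa.congr hxz, (hxa.sameItinerary_add hxz).iterate.symm.trans hxs⟩
  · exact ⟨b, hyb.congr hyz, (hyb.sameItinerary_add hyz).iterate.symm.trans hys⟩

theorem Minimal.isReturn_succ [Fintype ι] [Nontrivial ι] (hmin : A.Minimal)
    (hsep : A.SpecialSeparated n (2 * (n * Fintype.card ι + 2))) (hl : A.IsNextReturn s n 0 l) :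
    A.IsReturn s (n + 1) l := by
  obtain ⟨l', hl'R, hl'⟩ := hmin.exists_isNextReturn hsep (a := 0) s (by lia)
  obtain rfl := hl.unique hl'
  obtain ⟨L, hLR, hL⟩ := hmin.exists_isNextReturn hsep (a := l) s (by lia)
  have hlL : l < L := hL.1.1
  have hu : A.IsFirstSpecialTime n (A.preCut s (n + l)) l :=
    hl.isFirstSpecialTime (isReturn_zero s n) hsep (by lia)
  have hv : A.IsFirstSpecialTime n (A.preCut s (n + L)) (L - l) :=
    hL.isFirstSpecialTime hl.1.2 hsep (by lia)
  have huv : A.SameItinerary (n + 1) (A.preCut s (n + l)) (A.preCut s (n + L)) := by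
    refine hmin.sameItinerary_succ_of_return (fun t => hsep s t 0 (Nat.zero_le _))
      hl.1.2 hu ?_ hL.1.2 hv ?_
    · rw [iterate_preCut_add]
      exact .refl _ _
    · rw [show n + L = n + l + (L - l) by lia, iterate_preCut_add]
      exact hl.1.2
  obtain rfl : L = l + l := by
    have := (hu.congr huv).unique hv
    lia
  obtain ⟨d, rfl⟩ := Nat.exists_eq_add_of_lt hl.1.1
  have h := SameItinerary.iterate (n := n + 1) (j := d) ((hu.sameItinerary_add huv).mono (by lia))
  rw [show n + (0 + d + 1) = n + 1 + d by lia, iterate_preCut_add,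
    show n + (0 + d + 1 + (0 + d + 1)) = n + 1 + (0 + d + 1) + d by lia,
    iterate_preCut_add] at h
  exact h.symm

theorem Minimal.isNextReturn_succ [Fintype ι] [Nontrivial ι] (hmin : A.Minimal)
    (hsep : A.SpecialSeparated n (2 * (n * Fintype.card ι + 2))) (hl : A.IsNextReturn s n 0 l) :
    A.IsNextReturn s (n + 1) 0 l :=
  ⟨⟨hl.1.1, hmin.isReturn_succ hsep hl⟩, fun _ ⟨hb, hret⟩ => hl.2 ⟨hb, hret.of_succ⟩⟩

theorem preCut_sub_preCut_of_isReturn (h : A.IsReturn s n l) :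
    (A.preCut s (n + l) : ℝ) - A.preCut s n = A.preCut s l - A.preCut s 0 := by
  have hd := SameItinerary.iterate_sub_iterate h
  have h₀ : A.T^[n] (A.preCut s (n + l)) = A.preCut s l := by
    rw [add_comm, iterate_preCut_add]
  have h₁ : A.T^[n] (A.preCut s n) = A.preCut s 0 := by
    simpa only [zero_add] using iterate_preCut_add (A := A) (s := s) 0 n
  rw [h₀, h₁] at hd
  linarith

theorem Minimal.not_eventually_isReturn [Nonempty ι] (hmin : A.Minimal) (s : ι) (hl : 0 < l) :
    ¬ ∀ᶠ n in atTop, A.IsReturn s n l := by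
  intro h
  have hdist {δ : ℝ} (hδ : 0 < δ) : dist (A.preCut s l) (A.preCut s 0) < δ := by
    obtain ⟨n, hret, hn⟩ := (h.and (hmin.eventually_dist_lt_of_sameItinerary hδ)).exists
    rw [Subtype.dist_eq, Real.dist_eq, ← preCut_sub_preCut_of_isReturn hret, ← Real.dist_eq,
      ← Subtype.dist_eq]
    exact hn _ _ hret
  have heq : A.preCut s l = A.preCut s 0 :=
    dist_le_zero.mp (le_of_forall_pos_lt_add fun δ hδ => by simpa using hdist hδ)
  refine hmin.iterate_ne_self hl (x := A.preCut s 0) ?_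
  rw [← heq]
  simpa only [zero_add, heq] using iterate_preCut_add (A := A) (s := s) 0 l

theorem Minimal.not_eventually_specialSeparated [Fintype ι] [Nontrivial ι] (hmin : A.Minimal) :
    ¬ ∀ᶠ n in atTop, A.SpecialSeparated n (2 * (n * Fintype.card ι + 2)) := by
  intro h
  obtain ⟨N, hN⟩ := eventually_atTop.mp h
  obtain ⟨s⟩ := (inferInstance : Nonempty ι)
  obtain ⟨l, -, hl⟩ := hmin.exists_isNextReturn (hN N le_rfl) (a := 0) s (by lia)
  refine hmin.not_eventually_isReturn s hl.1.1 (eventually_atTop.mpr ⟨N, fun n hn => ?_⟩)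
  have hnext : A.IsNextReturn s n 0 l := by
    induction n, hn using Nat.le_induction with
    | base => exact hl
    | succ n hn ih => exact hmin.isNextReturn_succ (hN n hn) ih
  exact hnext.1.2

end Returns

section BirkhoffAverages

variable {E : Type*} [NormedAddCommGroup E] [NormedSpace ℝ E] {f : Set.Ico (0 : ℝ) lam → E}

theorem SameItinerary.dist_iterate (h : A.SameItinerary n x y) :
    dist (A.T^[n] x) (A.T^[n] y) = dist x y := by
  rw [dist_comm, dist_comm x, Subtype.dist_eq, Subtype.dist_eq, Real.dist_eq, Real.dist_eq,
    h.iterate_sub_iterate]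

theorem Minimal.eventually_dist_birkhoffAverage_lt_of_sameItinerary [Nonempty ι]
    (hmin : A.Minimal) (hf : UniformContinuous f) {ε : ℝ} (hε : 0 < ε) :
    ∀ᶠ n in atTop, ∀ x y, A.SameItinerary n x y →
      dist (birkhoffAverage ℝ A.T f n x) (birkhoffAverage ℝ A.T f n y) < ε := by
  obtain ⟨δ, hδ, hfδ⟩ := Metric.uniformContinuous_iff.mp hf (ε / 2) (by positivity)
  filter_upwards [hmin.eventually_dist_lt_of_sameItinerary hδ, eventually_gt_atTop 0]
    with n hn hpos x y hxy
  have hterm (k : ℕ) (hk : k ∈ Finset.range n) :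
      dist (f (A.T^[k] x)) (f (A.T^[k] y)) ≤ ε / 2 := by
    refine (hfδ ?_).le
    rw [(hxy.mono (Finset.mem_range.mp hk).le).dist_iterate]
    exact hn x y hxy
  calc dist (birkhoffAverage ℝ A.T f n x) (birkhoffAverage ℝ A.T f n y)
      ≤ (∑ k ∈ Finset.range n, dist (f (A.T^[k] x)) (f (A.T^[k] y))) / n :=
        dist_birkhoffAverage_birkhoffAverage_le ..
    _ ≤ n * (ε / 2) / n := by
        gcongr
        simpa using Finset.sum_le_sum hterm
    _ < ε := by
        rw [mul_div_cancel_left₀ _ (by positivity)]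
        exact half_lt_self hε

theorem birkhoffAverage_preCut_add (s : ι) (n r : ℕ) :
    birkhoffAverage ℝ A.T f n (A.preCut s (n + r)) =
      birkhoffAverage ℝ A.T.symm f n (A.T.symm^[r] (A.preCut s 1)) := by
  rw [birkhoffAverage, birkhoffAverage, preCut, Function.iterate_add_apply,
    birkhoffSum_perm_symm_iterate, ← Function.iterate_succ_apply' A.T.symm]
  rfl

theorem eventually_forall_le_mul_dist_birkhoffAverage_preCut_lt {a : E}
    (h : Tendsto (fun n => birkhoffAverage ℝ A.T f n (A.preCut s n)) atTop (𝓝 a)) (C : ℕ)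
    {ε : ℝ} (hε : 0 < ε) : ∀ᶠ n in atTop, ∀ r ≤ C * n,
      dist (birkhoffAverage ℝ A.T f n (A.preCut s (n + r))) a < ε := by
  simp only [birkhoffAverage_preCut_add]
  exact eventually_forall_le_mul_dist_birkhoffAverage_iterate_lt
    (h.congr fun n => birkhoffAverage_preCut_add s n 0) C hε

theorem tendsto_dist_birkhoffAverage_preCut_succ (hf : Bornology.IsBounded (Set.range f)) (s : ι) :
    Tendsto (fun n => dist (birkhoffAverage ℝ A.T f (n + 1) (A.preCut s (n + 1)))
      (birkhoffAverage ℝ A.T f n (A.preCut s n))) atTop (𝓝 0) :=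
  (tendsto_dist_birkhoffAverage_succ hf A.T.symm (A.preCut s 1)).congr fun n => by
    rw [← Function.iterate_zero_apply A.T.symm (A.preCut s 1), ← birkhoffAverage_preCut_add,
      ← birkhoffAverage_preCut_add, add_zero, add_zero]

theorem Minimal.eventually_exists_dist_birkhoffAverage_preCut_lt [Finite ι] [Nonempty ι]
    (hmin : A.Minimal) (hf : UniformContinuous f) {a : E}
    (hx : Tendsto (birkhoffAverage ℝ A.T f · x) atTop (𝓝 a)) {ε : ℝ} (hε : 0 < ε) :
    ∀ᶠ n in atTop, ∃ s, dist (birkhoffAverage ℝ A.T f n (A.preCut s n)) a < ε := by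
  cases nonempty_fintype ι
  filter_upwards [eventually_forall_le_mul_dist_birkhoffAverage_iterate_lt hx
      (Fintype.card ι + 1) (half_pos hε),
    hmin.eventually_dist_birkhoffAverage_lt_of_sameItinerary hf (half_pos hε),
    eventually_ge_atTop 1] with n horbit hclose hn
  obtain ⟨r, hr, s, hs⟩ := hmin.exists_isSpecial_iterate n x
  refine ⟨s, (dist_triangle_left _ _ (birkhoffAverage ℝ A.T f n (A.T^[r] x))).trans_lt ?_⟩
  linarith [hclose _ _ hs, horbit r (by nlinarith)]

theorem Minimal.exists_perm_tendsto_birkhoffAverage_preCut [Finite ι] [Nonempty ι]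
    (hmin : A.Minimal) (hf : UniformContinuous f) {x : ι → Set.Ico (0 : ℝ) lam} {a : ι → E}
    (hx : ∀ i, Tendsto (birkhoffAverage ℝ A.T f · (x i)) atTop (𝓝 (a i)))
    (ha : Function.Injective a) : ∃ τ : Equiv.Perm ι, ∀ i,
      Tendsto (fun n => birkhoffAverage ℝ A.T f n (A.preCut (τ i) n)) atTop (𝓝 (a i)) := by
  have huniv : TotallyBounded (Set.univ : Set (Set.Ico (0 : ℝ) lam)) := by
    rw [← Subtype.coe_preimage_self (Set.Ico (0 : ℝ) lam)]
    exact totallyBounded_preimage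
      isUniformEmbedding_subtype_val.isUniformInducing (totallyBounded_Ico 0 lam)
  have hbdd : Bornology.IsBounded (Set.range f) :=
    Set.image_univ (f := f) ▸ (huniv.image hf).isBounded
  exact exists_perm_tendsto_of_forall_eventually_exists_dist_lt ha
    (tendsto_dist_birkhoffAverage_preCut_succ hbdd)
    fun i ε hε => hmin.eventually_exists_dist_birkhoffAverage_preCut_lt hf (hx i) hε

theorem Minimal.not_injective_of_tendsto_birkhoffAverage [Finite ι] [Nontrivial ι]
    (hmin : A.Minimal) (hf : UniformContinuous f) {x : ι → Set.Ico (0 : ℝ) lam} {a : ι → E}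
    (hx : ∀ i, Tendsto (birkhoffAverage ℝ A.T f · (x i)) atTop (𝓝 (a i))) :
    ¬ Function.Injective a := by
  intro ha
  cases nonempty_fintype ι
  obtain ⟨τ, hτ⟩ := hmin.exists_perm_tendsto_birkhoffAverage_preCut hf hx ha
  obtain ⟨g, hg, hgap⟩ := exists_pos_forall_dist_lt_imp_eq ha
  have hg3 : 0 < g / 3 := by positivity
  refine hmin.not_eventually_specialSeparated ?_
  filter_upwards [eventually_all.mpr fun i =>
      eventually_forall_le_mul_dist_birkhoffAverage_preCut_lt (hτ i) (2 * Fintype.card ι + 4) hg3,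
    hmin.eventually_dist_birkhoffAverage_lt_of_sameItinerary hf hg3,
    eventually_ge_atTop 1] with n hwindow hclose hn s t r hr hst
  obtain ⟨i, rfl⟩ := τ.surjective s
  obtain ⟨j, rfl⟩ := τ.surjective t
  refine congrArg τ (hgap i j ?_)
  calc dist (a i) (a j) ≤ _ + _ + _ := dist_triangle4 _
        (birkhoffAverage ℝ A.T f n (A.preCut (τ i) (n + r)))
        (birkhoffAverage ℝ A.T f n (A.preCut (τ j) n)) _
    _ < g / 3 + g / 3 + g / 3 := by
        rw [dist_comm (a i)]
        gcongr
        · exact hwindow i r (by nlinarith)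
        · exact hclose _ _ hst
        · exact hwindow j 0 (Nat.zero_le _)
    _ = g := by ring

end BirkhoffAverages

end IntervalExchange

section RealLine

variable {k m : ℕ} {lam : ℝ} {T : ℝ → ℝ}

theorem IsIET.exists_mem_Ico {sep : Fin (k + 1) → ℝ} (hT : IsIET k lam sep T) {x : ℝ}
    (hx : x ∈ Set.Ico 0 lam) : ∃ i : Fin k, x ∈ Set.Ico (sep i.castSucc) (sep i.succ) := by
  have h (j : Fin (k + 1)) :
      x < sep j → ∃ i : Fin k, x ∈ Set.Ico (sep i.castSucc) (sep i.succ) := by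
    induction j using Fin.induction with
    | zero => exact fun hj => absurd hx.1 (hT.sep_zero ▸ hj).not_ge
    | succ i ih => exact fun hi => (le_or_gt (sep i.castSucc) x).elim (fun h => ⟨i, h, hi⟩) ih
  exact h (Fin.last k) (hT.sep_last.symm ▸ hx.2)

theorem IsIET.sep_pos {sep : Fin (k + 1) → ℝ} (hT : IsIET k lam sep T) {i : Fin (k + 1)}
    (hi : i ≠ 0) : 0 < sep i := hT.sep_zero ▸ hT.sep_mono (Fin.pos_iff_ne_zero.mpr hi)

theorem IsIET.sep_lt {sep : Fin (k + 1) → ℝ} (hT : IsIET k lam sep T) {i : Fin (k + 1)}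
    (hi : i ≠ Fin.last k) : sep i < lam :=
  hT.sep_last ▸ hT.sep_mono (Fin.lt_last_iff_ne_last.mpr hi)

variable {sep : Fin (m + 2) → ℝ}

theorem IsIET.sub_eq_sub_of_forall_sep_le_iff (hT : IsIET (m + 1) lam sep T) {x y : ℝ}
    (hx : x ∈ Set.Ico 0 lam) (hy : y ∈ Set.Ico 0 lam)
    (h : ∀ s : Fin m, sep s.castSucc.succ ≤ x ↔ sep s.castSucc.succ ≤ y) : T y - T x = y - x := by
  obtain ⟨i, hxi⟩ := hT.exists_mem_Ico hx
  obtain ⟨c, hc⟩ := hT.translation i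
  have hle : sep i.castSucc ≤ y := by
    cases i using Fin.cases with
    | zero => exact hT.sep_zero.trans_le hy.1
    | succ s => exact (h s).mp hxi.1
  have hlt : y < sep i.succ := by
    cases i using Fin.lastCases with
    | last => exact hy.2.trans_eq hT.sep_last.symm
    | cast s => exact not_le.mp fun hs => hxi.2.not_ge ((h s).mpr hs)
  rw [hc x hxi, hc y ⟨hle, hlt⟩, add_sub_add_right_eq_sub]

/-- The interval exchange on the subtype `[0, lam)` given by an exchange of `m + 1` intervals; its
`m` cut points are the separation points other than `0` and `lam`. -/
noncomputable def IsIET.toIntervalExchange (hT : IsIET (m + 1) lam sep T) :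
    IntervalExchange lam (Fin m) where
  T := hT.bijOn.equiv T
  cut s := ⟨sep s.castSucc.succ, (hT.sep_pos (Fin.succ_ne_zero _)).le,
    hT.sep_lt (by simp [← Fin.succ_last])⟩
  cut_pos _ := hT.sep_pos (Fin.succ_ne_zero _)
  translation x y h := hT.sub_eq_sub_of_forall_sep_le_iff x.2 y.2 h

theorem IsIET.coe_iterate_toIntervalExchange (hT : IsIET (m + 1) lam sep T) (n : ℕ)
    (x : Set.Ico (0 : ℝ) lam) : ((hT.toIntervalExchange.T^[n] x : _) : ℝ) = T^[n] x :=
  (show Function.Semiconj Subtype.val hT.toIntervalExchange.T T from fun _ => rfl).iterate_right n x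

theorem IsIET.minimal_toIntervalExchange (hT : IsIET (m + 1) lam sep T)
    (hmin : IETMinimal lam T) : hT.toIntervalExchange.Minimal := fun x => by
  rw [Subtype.dense_iff, ← Set.range_comp]
  simpa only [Set.range, Function.comp_apply, hT.coe_iterate_toIntervalExchange] using hmin x x.2

theorem IETGenericMeasure.exists_tendsto_birkhoffAverage {μ : Measure ℝ}
    (hμ : IETGenericMeasure lam T μ) (hT : IsIET (m + 1) lam sep T) {f : ℝ → ℝ}
    (hf : Continuous f) : ∃ x : Set.Ico (0 : ℝ) lam,
      Tendsto (birkhoffAverage ℝ hT.toIntervalExchange.T (f ∘ Subtype.val) · x) atTop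
        (𝓝 (∫ y, f y ∂μ)) := by
  obtain ⟨-, -, x, hx, hlim⟩ := hμ
  refine ⟨⟨x, hx⟩, (hlim f hf).congr fun n => ?_⟩
  simp only [birkhoffAverage, birkhoffSum, Function.comp_apply, hT.coe_iterate_toIntervalExchange,
    smul_eq_mul, div_eq_inv_mul]

end RealLine

/-- For `k > 2`, a minimal `k`-IET has at most `k - 2` distinct generic measures
(i.e. there is no family of `k - 1` distinct ones). -/
theorem iet_at_most_k_sub_two_generic_measures
    (k : ℕ) (hk : 2 < k) (lam : ℝ) (sep : Fin (k + 1) → ℝ) (T : ℝ → ℝ)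
    (hT : IsIET k lam sep T) (hmin : IETMinimal lam T) :
    ¬ ∃ μ : Fin (k - 1) → Measure ℝ, Function.Injective μ ∧
        ∀ i, IETGenericMeasure lam T (μ i) := by
  rintro ⟨μ, hinj, hμ⟩
  obtain ⟨m, rfl⟩ := Nat.exists_eq_add_one.mpr (Nat.zero_lt_of_lt hk)
  have : Nontrivial (Fin m) := Fin.nontrivial_iff_two_le.mpr (by lia)
  have : ∀ i, IsProbabilityMeasure (μ i) := fun i => (hμ i).1
  obtain ⟨f, hf⟩ := exists_injective_integral_boundedContinuousFunction hinj
  choose x hx using fun i => (hμ i).exists_tendsto_birkhoffAverage hT f.continuous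
  exact (hT.minimal_toIntervalExchange hmin).not_injective_of_tendsto_birkhoffAverage
    (uniformContinuous_comp_subtypeVal_Ico f.continuous 0 lam) hx hf
end
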